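/- arXiv:1412.2982 — 11 statements merged into one kernel-verified Lean document; each statement's English description precedes it below -/
import Mathlib

section
/- For every real ρ > 0, every real θ, and every natural number m, one has θ F_m(θ + 1) = (m+1) F_{m+1}(θ) − ρ F_m(θ). -/
/-!
Up to the factor `1 / n!`, `F_n(θ)` is the binomial convolution of `ρ ^ k` and `(θ)_ℓ`, so
`∑ F_n(θ) Xⁿ` is the product of their exponential generating series, namely
`G_θ = e ^ (ρ X) * (1 - X) ^ (-θ)`. Differentiating an exponential generating series shifts its
sequence, and the shifts are `ρ ^ (k + 1) = ρ * ρ ^ k` and `(θ)_(ℓ + 1) = θ * (θ + 1)_ℓ`. Hence the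
Leibniz rule gives `G_θ' = ρ G_θ + θ G_(θ + 1)`, and the identity is read off from the
coefficient of `X ^ m`.
-/

open Finset

/-- F_n(θ) = Σ_{ℓ=0}^{n} [ρ^{n−ℓ}/((n−ℓ)! ℓ!)] (θ)_ℓ, with (θ)_ℓ the rising factorial. -/
noncomputable def erlF (ρ θ : ℝ) (n : ℕ) : ℝ :=
  ∑ ℓ ∈ Finset.range (n + 1),
    ρ ^ (n - ℓ) / ((n - ℓ).factorial * ℓ.factorial) * (ascPochhammer ℝ ℓ).eval θ

open PowerSeries

theorem ascPochhammer_succ_eval_left {S : Type*} [CommSemiring S] (n : ℕ) (θ : S) :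
    (ascPochhammer S (n + 1)).eval θ = θ * (ascPochhammer S n).eval (θ + 1) := by
  simp [ascPochhammer_succ_left, Polynomial.eval_comp]

section RatAlgebra

variable {A : Type*} [CommRing A] [Algebra ℚ A]

/-- The exponential generating series `∑ aₙ Xⁿ / n!` of a sequence `a`. The coefficients `1 / n!`
act as rational scalars, so that `A` may be any commutative `ℚ`-algebra. -/
noncomputable def expGenSeries (a : ℕ → A) : A⟦X⟧ :=
  PowerSeries.mk fun n => (n.factorial : ℚ)⁻¹ • a n

theorem coeff_expGenSeries (a : ℕ → A) (n : ℕ) :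
    coeff n (expGenSeries a) = (n.factorial : ℚ)⁻¹ • a n :=
  coeff_mk n _

theorem expGenSeries_smul (c : A) (a : ℕ → A) : expGenSeries (c • a) = c • expGenSeries a := by
  ext n
  simp only [coeff_expGenSeries, coeff_smul, Pi.smul_apply, smul_comm c]

theorem derivative_expGenSeries (a : ℕ → A) :
    d⁄dX A (expGenSeries a) = expGenSeries fun n => a (n + 1) := by
  ext n
  have factorial_inv : ((n + 1).factorial : ℚ)⁻¹ * (n + 1 : ℚ) = (n.factorial : ℚ)⁻¹ := by
    rw [Nat.factorial_succ]
    push_cast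
    field_simp
  calc
    coeff n (d⁄dX A (expGenSeries a))
      = ((n + 1).factorial : ℚ)⁻¹ • (n + 1 : ℚ) • a (n + 1) := by
        rw [coeff_derivative, coeff_expGenSeries, smul_mul_assoc]
        simp only [Algebra.smul_def, map_add, map_natCast, map_one, mul_comm]
    _ = coeff n (expGenSeries fun n => a (n + 1)) := by
        rw [smul_smul, factorial_inv, coeff_expGenSeries]

theorem derivative_expGenSeries_pow (ρ : A) :
    d⁄dX A (expGenSeries fun k => ρ ^ k) = ρ • expGenSeries fun k => ρ ^ k := by
  rw [derivative_expGenSeries, ← expGenSeries_smul]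
  congr 1 with k
  exact pow_succ' ρ k

theorem derivative_expGenSeries_ascPochhammer (θ : A) :
    d⁄dX A (expGenSeries fun ℓ => (ascPochhammer A ℓ).eval θ) =
      θ • expGenSeries fun ℓ => (ascPochhammer A ℓ).eval (θ + 1) := by
  rw [derivative_expGenSeries, ← expGenSeries_smul]
  congr 1 with ℓ
  exact ascPochhammer_succ_eval_left ℓ θ

/-- The generating series `∑ F_n(θ) Xⁿ`, for `ρ` and `θ` in any commutative `ℚ`-algebra, written as
a product of exponential generating series: the factors are `(1 - X) ^ (-θ)` and `e ^ (ρ X)`. -/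
noncomputable def erlSeries (ρ θ : A) : A⟦X⟧ :=
  (expGenSeries fun ℓ => (ascPochhammer A ℓ).eval θ) * expGenSeries fun k => ρ ^ k

theorem derivative_erlSeries (ρ θ : A) :
    d⁄dX A (erlSeries ρ θ) = ρ • erlSeries ρ θ + θ • erlSeries ρ (θ + 1) := by
  simp only [erlSeries, Derivation.leibniz, derivative_expGenSeries_pow,
    derivative_expGenSeries_ascPochhammer, smul_eq_mul, mul_smul_comm]
  rw [mul_comm (expGenSeries fun k => ρ ^ k)]

theorem erlF_shift_identity_general (ρ θ : A) (m : ℕ) :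
    θ * coeff m (erlSeries ρ (θ + 1)) =
      ((m : A) + 1) * coeff (m + 1) (erlSeries ρ θ) - ρ * coeff m (erlSeries ρ θ) := by
  have coeff_eq := congrArg (coeff m) (derivative_erlSeries ρ θ)
  simp only [coeff_derivative, map_add, coeff_smul, smul_eq_mul] at coeff_eq
  linear_combination -coeff_eq

end RatAlgebra

theorem erlF_eq_coeff_erlSeries (ρ θ : ℝ) (n : ℕ) : erlF ρ θ n = coeff n (erlSeries ρ θ) := by
  simp only [erlF, erlSeries, coeff_mul, coeff_expGenSeries]
  rw [Nat.sum_antidiagonal_eq_sum_range_succ fun ℓ k =>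
    ((ℓ.factorial : ℚ)⁻¹ • (ascPochhammer ℝ ℓ).eval θ) * ((k.factorial : ℚ)⁻¹ • ρ ^ k)]
  refine sum_congr rfl fun ℓ _ => ?_
  simp only [Rat.smul_def, Rat.cast_inv, Rat.cast_natCast]
  field_simp

/-- θ F_m(θ + 1) = (m+1) F_{m+1}(θ) − ρ F_m(θ). -/
theorem erlF_shift_identity (ρ : ℝ) (hρ : 0 < ρ) (θ : ℝ) (m : ℕ) :
    θ * erlF ρ (θ + 1) m = ((m : ℝ) + 1) * erlF ρ θ (m + 1) - ρ * erlF ρ θ m := by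
  simpa only [erlF_eq_coeff_erlSeries] using erlF_shift_identity_general ρ θ m
end

section
/- For every real ρ > 0 and all natural numbers n and k, the value of F_n at the negative integer −k is given by F_n(−k) = Σ_{j=0}^{min(k,n)} C(k,j) (−1)^j ρ^{n−j}/(n−j)!, where C(k,j) is the binomial coefficient. -/
open Finset

theorem ascPochhammer_eval_neg_eq_factorial_mul_choose {R : Type*} [Ring R] [BinomialRing R]
    (r : R) (n : ℕ) :
    (ascPochhammer R n).eval (-r) = (-1) ^ n * (n.factorial * Ring.choose r n) := by
  rw [← Polynomial.ascPochhammer_smeval_eq_eval,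
    Polynomial.ascPochhammer_smeval_neg_eq_descPochhammer,
    Ring.descPochhammer_eq_factorial_smul_choose, nsmul_eq_mul, Int.negOnePow_def]
  simp [Units.smul_def]

theorem sum_range_min_natCast_choose_mul {R : Type*} [NonAssocSemiring R] (f : ℕ → R) (k n : ℕ) :
    ∑ j ∈ range (min k n + 1), (k.choose j : R) * f j =
      ∑ j ∈ range (n + 1), (k.choose j : R) * f j := by
  refine sum_subset (range_mono (by lia)) fun j hjn hjk => ?_
  have hkj : k < j := by
    rw [mem_range] at hjn hjk
    lia
  rw [Nat.choose_eq_zero_of_lt hkj, Nat.cast_zero, zero_mul]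

theorem erlF_at_neg_int_general (ρ x : ℝ) (n : ℕ) :
    erlF ρ (-x) n =
      ∑ j ∈ range (n + 1), Ring.choose x j * (-1) ^ j * ρ ^ (n - j) / (n - j).factorial := by
  refine sum_congr rfl fun j _ => ?_
  rw [ascPochhammer_eval_neg_eq_factorial_mul_choose]
  field_simp

/-- F_n(−k) = Σ_{j=0}^{min(k,n)} C(k,j) (−1)^j ρ^{n−j}/(n−j)!. -/
theorem erlF_at_neg_int (ρ : ℝ) (hρ : 0 < ρ) (n k : ℕ) :
    erlF ρ (-(k : ℝ)) n =
      ∑ j ∈ Finset.range (min k n + 1),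
        (k.choose j : ℝ) * (-1) ^ j * ρ ^ (n - j) / (n - j).factorial := by
  simp only [erlF_at_neg_int_general, Ring.choose_natCast, mul_assoc, mul_div_assoc,
    sum_range_min_natCast_choose_mul]
end

section
/- For every real ρ > 0, every natural number m, and every real θ > −1, one has (ρ^m/m!) ∫_0^∞ e^{−ξ} ξ^θ (1 + ξ/ρ)^m dξ = Γ(θ+1) F_m(θ+1), where Γ is the real Gamma function; both sides equal Σ_{ℓ=0}^{m} ρ^{m−ℓ} Γ(θ+ℓ+1)/((m−ℓ)! ℓ!). -/
open Finset MeasureTheory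

/-!
Multiplying by `ρ ^ m` turns the integrand into `e ^ (-ξ) * ξ ^ θ` times the polynomial
`(ξ + ρ) ^ m`. Each monomial `ξ ^ ℓ` then integrates to `Γ(θ + ℓ + 1)`, which equals
`Γ(θ + 1) * (θ + 1)_ℓ` by the functional equation of `Γ`, and the binomial coefficients divided by
`m!` are the coefficients `1 / ((m - ℓ)! ℓ!)` of `erlF`.
-/

theorem Gamma_add_natCast_eq_mul_ascPochhammer {s : ℝ} (hs : ∀ k : ℕ, s ≠ -k) (n : ℕ) :
    Real.Gamma (s + n) = Real.Gamma s * (ascPochhammer ℝ n).eval s := by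
  have hquot : Real.Gamma (s + n) / Real.Gamma s = (ascPochhammer ℝ n).eval s := by
    have hquotC := Complex.Gamma_add_nat_div_Gamma_eq (n := n) (s : ℂ) fun k => mod_cast hs k
    rw [← ascPochhammer_map (algebraMap ℝ ℂ), Polynomial.eval_map_algebraMap,
      ← Complex.coe_algebraMap, Polynomial.aeval_algebraMap_apply_eq_algebraMap_eval] at hquotC
    simp only [Complex.coe_algebraMap, ← Complex.ofReal_natCast, ← Complex.ofReal_add,
      Complex.Gamma_ofReal] at hquotC
    exact_mod_cast hquotC
  rw [← hquot, mul_div_cancel₀ _ (Real.Gamma_ne_zero hs)]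

theorem Gamma_mul_erlF (ρ : ℝ) {s : ℝ} (hs : ∀ k : ℕ, s ≠ -k) (n : ℕ) :
    Real.Gamma s * erlF ρ s n
      = ∑ ℓ ∈ Finset.range (n + 1),
          ρ ^ (n - ℓ) * Real.Gamma (s + ℓ) / ((n - ℓ).factorial * ℓ.factorial) := by
  rw [erlF, Finset.mul_sum]
  refine Finset.sum_congr rfl fun ℓ _ => ?_
  rw [Gamma_add_natCast_eq_mul_ascPochhammer hs]
  ring

theorem integral_exp_neg_mul_rpow_mul_polynomial {θ : ℝ} (hθ : -1 < θ) (p : Polynomial ℝ) :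
    ∫ ξ in Set.Ioi (0 : ℝ), Real.exp (-ξ) * ξ ^ θ * p.eval ξ
      = p.sum fun n a => a * Real.Gamma (θ + n + 1) := by
  have hpos (n : ℕ) : 0 < θ + n + 1 := by linarith [n.cast_nonneg (α := ℝ)]
  have hexpand : Set.EqOn (fun ξ : ℝ => Real.exp (-ξ) * ξ ^ θ * p.eval ξ)
      (fun ξ => ∑ n ∈ p.support, p.coeff n * (Real.exp (-ξ) * ξ ^ (θ + n + 1 - 1)))
      (Set.Ioi 0) := by
    intro ξ hξ
    simp only [Polynomial.eval_eq_sum, Polynomial.sum_def, Finset.mul_sum]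
    refine Finset.sum_congr rfl fun n _ => ?_
    rw [add_sub_cancel_right, Real.rpow_add_natCast hξ.ne']
    ring
  rw [setIntegral_congr_fun measurableSet_Ioi hexpand,
    integral_finsetSum _ fun n _ => (Real.GammaIntegral_convergent (hpos n)).const_mul _]
  simp only [integral_const_mul, ← Real.Gamma_eq_integral (hpos _), Polynomial.sum_def]

theorem integral_exp_neg_mul_rpow_mul_add_pow (ρ : ℝ) (m : ℕ) {θ : ℝ} (hθ : -1 < θ) :
    ∫ ξ in Set.Ioi (0 : ℝ), Real.exp (-ξ) * ξ ^ θ * (ξ + ρ) ^ m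
      = ∑ ℓ ∈ Finset.range (m + 1), ρ ^ (m - ℓ) * m.choose ℓ * Real.Gamma (θ + ℓ + 1) := by
  have hintegral :=
    integral_exp_neg_mul_rpow_mul_polynomial hθ ((Polynomial.X + Polynomial.C ρ) ^ m)
  rw [Polynomial.sum_over_range _ (by simp), Polynomial.natDegree_pow_X_add_C] at hintegral
  simpa only [Polynomial.eval_pow, Polynomial.eval_add, Polynomial.eval_X, Polynomial.eval_C,
    Polynomial.coeff_X_add_C_pow] using hintegral

theorem pow_mul_integral_exp_neg_mul_rpow_mul_one_add_div_pow {ρ : ℝ} (hρ : ρ ≠ 0)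
    (m : ℕ) (θ : ℝ) :
    ρ ^ m * ∫ ξ in Set.Ioi (0 : ℝ), Real.exp (-ξ) * ξ ^ θ * (1 + ξ / ρ) ^ m
      = ∫ ξ in Set.Ioi (0 : ℝ), Real.exp (-ξ) * ξ ^ θ * (ξ + ρ) ^ m := by
  rw [← integral_const_mul]
  refine integral_congr_ae (.of_forall fun ξ => ?_)
  have hscale : ξ + ρ = ρ * (1 + ξ / ρ) := by field_simp; ring
  simp only [hscale, mul_pow]
  ring

theorem erlF_jagerman_integral_general {ρ : ℝ} (hρ : ρ ≠ 0) (m : ℕ) {θ : ℝ} (hθ : -1 < θ) :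
    (ρ ^ m / m.factorial) *
        ∫ ξ in Set.Ioi (0 : ℝ), Real.exp (-ξ) * ξ ^ θ * (1 + ξ / ρ) ^ m
      = Real.Gamma (θ + 1) * erlF ρ (θ + 1) m
    ∧ Real.Gamma (θ + 1) * erlF ρ (θ + 1) m
      = ∑ ℓ ∈ Finset.range (m + 1),
          ρ ^ (m - ℓ) * Real.Gamma (θ + ℓ + 1) / ((m - ℓ).factorial * ℓ.factorial) := by
  have hnotPole (k : ℕ) : θ + 1 ≠ -k := by linarith [k.cast_nonneg (α := ℝ)]
  have hsum := Gamma_mul_erlF ρ hnotPole m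
  simp only [add_right_comm θ 1] at hsum
  refine ⟨?_, hsum⟩
  rw [hsum, div_mul_eq_mul_div, pow_mul_integral_exp_neg_mul_rpow_mul_one_add_div_pow hρ,
    integral_exp_neg_mul_rpow_mul_add_pow ρ m hθ, Finset.sum_div]
  refine Finset.sum_congr rfl fun ℓ hℓ => ?_
  rw [Nat.cast_choose ℝ (Finset.mem_range_succ_iff.mp hℓ)]
  field_simp

/-- for ρ > 0, m ∈ ℕ, θ > −1,
(ρ^m/m!) ∫_0^∞ e^{−ξ} ξ^θ (1 + ξ/ρ)^m dξ = Γ(θ+1) F_m(θ+1), and both sides equal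
Σ_{ℓ=0}^{m} ρ^{m−ℓ} Γ(θ+ℓ+1)/((m−ℓ)! ℓ!). -/
theorem erlF_jagerman_integral (ρ : ℝ) (hρ : 0 < ρ) (m : ℕ) (θ : ℝ) (hθ : -1 < θ) :
    (ρ ^ m / m.factorial) *
        ∫ ξ in Set.Ioi (0 : ℝ), Real.exp (-ξ) * ξ ^ θ * (1 + ξ / ρ) ^ m
      = Real.Gamma (θ + 1) * erlF ρ (θ + 1) m
    ∧ Real.Gamma (θ + 1) * erlF ρ (θ + 1) m
      = ∑ ℓ ∈ Finset.range (m + 1),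
          ρ ^ (m - ℓ) * Real.Gamma (θ + ℓ + 1) / ((m - ℓ).factorial * ℓ.factorial) :=
  erlF_jagerman_integral_general hρ.ne' m hθ
end

section
/- Fix a real ρ > 0 and a natural number n₀, and for t ≥ 0 and n ∈ ℕ define p_n(t) = e^{−ρσ(t)} Σ_{j=0}^{min(n,n₀)} C(n₀,j) e^{−jt} ρ^{n−j} σ(t)^{n+n₀−2j}/(n−j)!, where σ(t) = 1 − e^{−t}, and set p_{−1}(t) = 0. Then p_n(0) = 1 if n = n₀ and p_n(0) = 0 otherwise, and for every n ∈ ℕ and every t > 0 the function p_n is differentiable at t with p_n′(t) = ρ[p_{n−1}(t) − p_n(t)] + (n+1) p_{n+1}(t) − n p_n(t). -/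
open Finset

/-- σ(t) = 1 − e^{−t}. -/
noncomputable def sigmaMMinf (t : ℝ) : ℝ := 1 - Real.exp (-t)

/-- The transient M/M/∞ queue-length probabilities started from n₀:
p_n(t) = e^{−ρσ(t)} Σ_{j=0}^{min(n,n₀)} C(n₀,j) e^{−jt} ρ^{n−j} σ(t)^{n+n₀−2j}/(n−j)!. -/
noncomputable def pMMinf (ρ : ℝ) (n₀ n : ℕ) (t : ℝ) : ℝ :=
  Real.exp (-ρ * sigmaMMinf t) *
    ∑ j ∈ Finset.range (min n n₀ + 1),
      (n₀.choose j : ℝ) * Real.exp (-(j : ℝ) * t) * ρ ^ (n - j) *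
        sigmaMMinf t ^ (n + n₀ - 2 * j) / (n - j).factorial

/-- p extended to integer indices, with p_{-1}(t) = 0. -/
noncomputable def pMMinfZ (ρ : ℝ) (n₀ : ℕ) (n : ℤ) (t : ℝ) : ℝ :=
  if n < 0 then 0 else pMMinf ρ n₀ n.toNat t

/-!
The customers present at time `0` leave independently, each surviving up to time `t` with
probability `e⁻ᵗ`, and the later arrivals contribute an independent Poisson number of customers with
mean `ρσ(t)`. So the generating function of `n ↦ pₙ(t)` is the formal power series
`(σ + e⁻ᵗX)^n₀ · exp(ρσ(X - 1))`. In terms of generating functions the forward equations read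
`∂G/∂t = (1 - X)(∂G/∂X - ρG)`. By the Leibniz rule, the product of a solution with arrival rate `a`
and one with arrival rate `b` is a solution with arrival rate `a + b`, which leaves only the
Bernoulli factor (rate `0`) and the Poisson factor (rate `ρ`) to be checked.
-/

section ForwardEquations

open PowerSeries

lemma derivative_rescale {R : Type*} [CommSemiring R] (a : R) (F : R⟦X⟧) :
    d⁄dX R (rescale a F) = C a * rescale a (d⁄dX R F) := by
  ext n
  simp only [coeff_derivative, coeff_rescale, coeff_C_mul]
  ring

section CoefficientwiseDerivative

variable {𝕜 R : Type*} [NontriviallyNormedField 𝕜]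

/-- Coefficientwise differentiability at `t` of a one-parameter family of formal power series. -/
def HasCoeffDerivAt [NormedRing R] [NormedAlgebra 𝕜 R] (G : 𝕜 → R⟦X⟧) (G' : R⟦X⟧) (t : 𝕜) : Prop :=
  ∀ n, HasDerivAt (fun s => coeff n (G s)) (coeff n G') t

namespace HasCoeffDerivAt

section NormedRing

variable [NormedRing R] [NormedAlgebra 𝕜 R] {F G : 𝕜 → R⟦X⟧} {F' G' : R⟦X⟧} {f : 𝕜 → R} {f' : R}
  {t : 𝕜}

lemma congr_deriv (hF : HasCoeffDerivAt F F' t) (h : F' = G') : HasCoeffDerivAt F G' t :=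
  h ▸ hF

lemma add (hF : HasCoeffDerivAt F F' t) (hG : HasCoeffDerivAt G G' t) :
    HasCoeffDerivAt (fun s => F s + G s) (F' + G') t := fun n => by
  simpa only [map_add] using (hF n).fun_add (hG n)

lemma mul (hF : HasCoeffDerivAt F F' t) (hG : HasCoeffDerivAt G G' t) :
    HasCoeffDerivAt (fun s => F s * G s) (F' * G t + F t * G') t := fun n => by
  simp only [map_add, coeff_mul, ← sum_add_distrib]
  exact HasDerivAt.fun_sum fun x _ => (hF x.1).fun_mul (hG x.2)

lemma const (F : R⟦X⟧) (t : 𝕜) : HasCoeffDerivAt (fun _ => F) 0 t := fun n => by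
  simpa only [map_zero] using hasDerivAt_const t (coeff n F)

lemma C_comp (hf : HasDerivAt f f' t) : HasCoeffDerivAt (fun s => C (f s)) (C f') t := by
  rintro (_ | n)
  · simpa only [coeff_zero_C] using hf
  · simpa only [coeff_succ_C] using hasDerivAt_const t (0 : R)

end NormedRing

protected lemma rescale [NormedCommRing R] [NormedAlgebra 𝕜 R] {f : 𝕜 → R} {f' : R} {t : 𝕜}
    (hf : HasDerivAt f f' t) (F : R⟦X⟧) :
    HasCoeffDerivAt (fun s => rescale (f s) F) (C f' * (X * rescale (f t) (d⁄dX R F))) t := by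
  rintro (_ | n)
  · simpa using hasDerivAt_const t (coeff 0 F)
  · simp only [coeff_rescale, coeff_C_mul, coeff_succ_X_mul, coeff_derivative]
    refine ((hf.fun_pow (n + 1)).mul_const _).congr_deriv ?_
    rw [Nat.add_sub_cancel, Nat.cast_succ]
    ring

end HasCoeffDerivAt

end CoefficientwiseDerivative

section ForwardOperator

variable {R : Type*} [CommRing R]

/-- The operator `G ↦ (1 - X)(dG/dX - ρG)`: the right-hand side of the forward equations of the M/M/∞
queue with arrival rate `ρ` and service rate `1`, expressed in terms of generating functions. -/
noncomputable def forwardOperator (ρ : R) (G : R⟦X⟧) : R⟦X⟧ :=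
  (1 - X) * (d⁄dX R G - C ρ * G)

lemma coeff_forwardOperator (ρ : R) (G : R⟦X⟧) (n : ℕ) :
    coeff n (forwardOperator ρ G) =
      ρ * (coeff n (X * G) - coeff n G) + (n + 1) * coeff (n + 1) G - n * coeff n G := by
  have coeff_X_mul_derivative : coeff n (X * d⁄dX R G) = n * coeff n G := by
    cases n with
    | zero => simp
    | succ n => rw [coeff_succ_X_mul, coeff_derivative, Nat.cast_succ, mul_comm]
  have expand : forwardOperator ρ G =
      C ρ * (X * G) - C ρ * G + d⁄dX R G - X * d⁄dX R G := by
    rw [forwardOperator]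
    ring
  simp only [expand, map_add, map_sub, coeff_C_mul, coeff_X_mul_derivative, coeff_derivative]
  ring

lemma forwardOperator_add_mul (a b : R) (F G : R⟦X⟧) :
    forwardOperator (a + b) (F * G) = forwardOperator a F * G + F * forwardOperator b G := by
  simp only [forwardOperator, Derivation.leibniz, smul_eq_mul, map_add]
  ring

end ForwardOperator

section Solutions

variable {𝕜 R : Type*} [NontriviallyNormedField 𝕜] [NormedCommRing R] [NormedAlgebra 𝕜 R]

/-- The coefficients of `G t` solve, at every time `t`, the forward equations of the M/M/∞ queue
with arrival rate `ρ` and service rate `1`. -/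
def SolvesForwardEquations (ρ : R) (G : 𝕜 → R⟦X⟧) : Prop :=
  ∀ t, HasCoeffDerivAt G (forwardOperator ρ (G t)) t

namespace SolvesForwardEquations

variable {a b : R} {F G : 𝕜 → R⟦X⟧}

lemma mul (hF : SolvesForwardEquations a F) (hG : SolvesForwardEquations b G) :
    SolvesForwardEquations (a + b) fun t => F t * G t := fun t => by
  simpa only [forwardOperator_add_mul] using (hF t).mul (hG t)

lemma one : SolvesForwardEquations (0 : R) fun _ : 𝕜 => 1 := fun t => by
  simpa [forwardOperator] using HasCoeffDerivAt.const (1 : R⟦X⟧) t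

lemma pow (hG : SolvesForwardEquations a G) (n : ℕ) :
    SolvesForwardEquations (n * a) fun t => G t ^ n := by
  induction n with
  | zero => simpa using one
  | succ n ih => simpa only [pow_succ, Nat.cast_succ, add_one_mul] using ih.mul hG

end SolvesForwardEquations

end Solutions

section Bernoulli

variable {R : Type*}

/-- The generating function of the Bernoulli distribution with success probability `p`. -/
noncomputable def bernoulliGenFun [Ring R] (p : R) : R⟦X⟧ := C (1 - p) + C p * X

lemma coeff_bernoulliGenFun_pow [CommRing R] (p : R) (n j : ℕ) :
    coeff j (bernoulliGenFun p ^ n) = n.choose j * p ^ j * (1 - p) ^ (n - j) := by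
  have expand : bernoulliGenFun p ^ n =
      ∑ k ∈ range (n + 1), C (n.choose k * p ^ k * (1 - p) ^ (n - k)) * X ^ k := by
    rw [bernoulliGenFun, add_comm, add_pow]
    refine sum_congr rfl fun k _ => ?_
    simp only [map_mul, map_pow, map_natCast]
    ring
  simp only [expand, map_sum, coeff_C_mul_X_pow, sum_ite_eq, mem_range]
  split_ifs with hj
  · rfl
  · rw [Nat.choose_eq_zero_of_lt (by omega), Nat.cast_zero, zero_mul, zero_mul]

lemma solvesForwardEquations_bernoulliGenFun {𝕜 : Type*} [NontriviallyNormedField 𝕜]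
    [NormedCommRing R] [NormedAlgebra 𝕜 R] {p : 𝕜 → R} (hp : ∀ t, HasDerivAt p (-p t) t) :
    SolvesForwardEquations 0 fun t => bernoulliGenFun (p t) := fun t => by
  refine ((HasCoeffDerivAt.C_comp ((hp t).const_sub 1)).add
    ((HasCoeffDerivAt.C_comp (hp t)).mul (HasCoeffDerivAt.const X t))).congr_deriv ?_
  simp only [forwardOperator, bernoulliGenFun, map_add, map_sub, map_neg, map_zero, map_one,
    Derivation.leibniz, derivative_C, derivative_one, derivative_X, smul_eq_mul]
  ring

end Bernoulli

section Poisson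

/-- The generating function `exp(m(X - 1))` of the Poisson distribution with mean `m`. -/
noncomputable def poissonGenFun (m : ℝ) : ℝ⟦X⟧ := C (Real.exp (-m)) * rescale m (exp ℝ)

lemma coeff_poissonGenFun (m : ℝ) (k : ℕ) :
    coeff k (poissonGenFun m) = Real.exp (-m) * m ^ k / k.factorial := by
  simp [poissonGenFun, coeff_exp, div_eq_mul_inv, mul_assoc]

lemma poissonGenFun_zero : poissonGenFun 0 = 1 := by
  simp [poissonGenFun]

lemma derivative_poissonGenFun (m : ℝ) : d⁄dX ℝ (poissonGenFun m) = C m * poissonGenFun m := by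
  simp only [poissonGenFun, Derivation.leibniz, derivative_C, derivative_rescale, derivative_exp,
    smul_eq_mul]
  ring

lemma hasCoeffDerivAt_poissonGenFun {m : ℝ → ℝ} {m' t : ℝ} (hm : HasDerivAt m m' t) :
    HasCoeffDerivAt (fun s => poissonGenFun (m s)) (C m' * (X - 1) * poissonGenFun (m t)) t := by
  refine ((HasCoeffDerivAt.C_comp hm.fun_neg.exp).mul
    (HasCoeffDerivAt.rescale hm (exp ℝ))).congr_deriv ?_
  simp only [poissonGenFun, derivative_exp, map_mul, map_neg]
  ring

lemma solvesForwardEquations_poissonGenFun {ρ : ℝ} {m : ℝ → ℝ}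
    (hm : ∀ t, HasDerivAt m (ρ - m t) t) :
    SolvesForwardEquations ρ fun t => poissonGenFun (m t) := fun t => by
  refine (hasCoeffDerivAt_poissonGenFun (hm t)).congr_deriv ?_
  simp only [forwardOperator, derivative_poissonGenFun, map_sub]
  ring

end Poisson

section Transient

/-- The generating function of the M/M/∞ queue length at time `t`, started from `n₀` customers. -/
noncomputable def genFunMMinf (ρ : ℝ) (n₀ : ℕ) (t : ℝ) : ℝ⟦X⟧ :=
  bernoulliGenFun (Real.exp (-t)) ^ n₀ * poissonGenFun (ρ * sigmaMMinf t)

variable (ρ : ℝ) (n₀ n : ℕ) (t : ℝ)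

lemma pMMinf_eq_coeff : pMMinf ρ n₀ n t = coeff n (genFunMMinf ρ n₀ t) := by
  rw [genFunMMinf, coeff_mul, Nat.sum_antidiagonal_eq_sum_range_succ_mk, pMMinf, mul_sum]
  simp only [coeff_bernoulliGenFun_pow, coeff_poissonGenFun]
  refine sum_subset_zero_on_sdiff (range_subset_range.2 (by omega)) ?_ ?_
  · intro j hj
    have hj₀ : n₀ < j := by
      simp only [mem_sdiff, mem_range] at hj
      omega
    simp [Nat.choose_eq_zero_of_lt hj₀]
  · intro j hj
    have exponent_split : n + n₀ - 2 * j = (n - j) + (n₀ - j) := by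
      rw [mem_range] at hj
      omega
    rw [exponent_split, neg_mul_comm (j : ℝ), Real.exp_nat_mul, neg_mul, ← sigmaMMinf]
    ring

lemma pMMinfZ_eq_coeff : pMMinfZ ρ n₀ ((n : ℤ) - 1) t = coeff n (X * genFunMMinf ρ n₀ t) := by
  cases n with
  | zero => simp [pMMinfZ]
  | succ n => simp [pMMinfZ, pMMinf_eq_coeff, coeff_succ_X_mul]

lemma genFunMMinf_zero : genFunMMinf ρ n₀ 0 = X ^ n₀ := by
  simp [genFunMMinf, bernoulliGenFun, sigmaMMinf, poissonGenFun_zero]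

lemma solvesForwardEquations_genFunMMinf : SolvesForwardEquations ρ (genFunMMinf ρ n₀) := by
  have survival_deriv (t : ℝ) : HasDerivAt (fun s => Real.exp (-s)) (-Real.exp (-t)) t := by
    simpa using (hasDerivAt_neg t).exp
  have mean_deriv (t : ℝ) :
      HasDerivAt (fun s => ρ * sigmaMMinf s) (ρ - ρ * sigmaMMinf t) t := by
    refine (((survival_deriv t).const_sub 1).const_mul ρ).congr_deriv ?_
    rw [sigmaMMinf]
    ring
  have h := ((solvesForwardEquations_bernoulliGenFun survival_deriv).pow n₀).mul
    (solvesForwardEquations_poissonGenFun mean_deriv)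
  rwa [mul_zero, zero_add] at h

end Transient

end ForwardEquations

theorem pMMinf_solves_forward_equations_general (ρ : ℝ) (n₀ : ℕ) :
    (∀ n : ℕ, pMMinf ρ n₀ n 0 = if n = n₀ then 1 else 0)
    ∧ ∀ n : ℕ, ∀ t : ℝ,
        HasDerivAt (fun s => pMMinf ρ n₀ n s)
          (ρ * (pMMinfZ ρ n₀ ((n : ℤ) - 1) t - pMMinf ρ n₀ n t)
            + ((n : ℝ) + 1) * pMMinf ρ n₀ (n + 1) t - (n : ℝ) * pMMinf ρ n₀ n t) t := by
  refine ⟨fun n => ?_, fun n t => ?_⟩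
  · rw [pMMinf_eq_coeff, genFunMMinf_zero, PowerSeries.coeff_X_pow]
  · simp only [pMMinf_eq_coeff, pMMinfZ_eq_coeff, ← coeff_forwardOperator]
    exact solvesForwardEquations_genFunMMinf ρ n₀ t n

/-- p_n(0) = δ(n,n₀), and for every n ∈ ℕ and t > 0, p_n is
differentiable at t with p_n′(t) = ρ[p_{n−1}(t) − p_n(t)] + (n+1) p_{n+1}(t) − n p_n(t)
(with the convention p_{−1} = 0). -/
theorem pMMinf_solves_forward_equations (ρ : ℝ) (hρ : 0 < ρ) (n₀ : ℕ) :
    (∀ n : ℕ, pMMinf ρ n₀ n 0 = if n = n₀ then 1 else 0)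
    ∧ ∀ n : ℕ, ∀ t : ℝ, 0 < t →
        HasDerivAt (fun s => pMMinf ρ n₀ n s)
          (ρ * (pMMinfZ ρ n₀ ((n : ℤ) - 1) t - pMMinf ρ n₀ n t)
            + ((n : ℝ) + 1) * pMMinf ρ n₀ (n + 1) t - (n : ℝ) * pMMinf ρ n₀ n t) t :=
  (pMMinf_solves_forward_equations_general ρ n₀).imp_right fun h n t _ => h n t
end

section
/- Fix a real ρ > 0 and a natural number n₀. For every natural number n and every real t ≥ 0, the series (n₀! e^{−ρ}/ρ^{n₀}) Σ_{k=0}^{∞} (ρ^k/k!) e^{−kt} F_{n₀}(−k) F_n(−k) converges and equals e^{−ρσ(t)} Σ_{j=0}^{min(n,n₀)} C(n₀,j) e^{−jt} ρ^{n−j} σ(t)^{n+n₀−2j}/(n−j)!, where σ(t) = 1 − e^{−t} and F_n(−k) = Σ_{j=0}^{min(k,n)} C(k,j) (−1)^j ρ^{n−j}/(n−j)!. -/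
open Finset

/-- F_n(−k) = Σ_{j=0}^{min(k,n)} C(k,j) (−1)^j ρ^{n−j}/(n−j)!, the value at −k of
F_n(θ) = Σ_{ℓ=0}^{n} [ρ^{n−ℓ}/((n−ℓ)! ℓ!)] (θ)_ℓ. -/
noncomputable def erlFneg (ρ : ℝ) (n k : ℕ) : ℝ :=
  ∑ j ∈ Finset.range (min k n + 1),
    (k.choose j : ℝ) * (-1) ^ j * ρ ^ (n - j) / (n - j).factorial

/-! Write `⟨f⟩` for `∑ₖ yᵏ/k! f(k)` with `y = ρ e^{-t}`. The values `F_n(-k)` are those of a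
Charlier polynomial in `k`, with generating function `(1 - X)ᵏ e^{ρX}`. The Charlier polynomials
`C_n` with parameter `y` are orthogonal for `⟨·⟩`: differentiating the generating function in `X`
and shifting the summation index gives `(n + 1)⟨g C_{n+1}⟩ = -y⟨Δg · C_n⟩`, while
`Δ C_{m+1} = -C_m`. Splitting `e^{ρX} = e^{yX} e^{(ρ-y)X}` expands the polynomials with parameter
`ρ` in the `C_n`, and orthogonality leaves only the diagonal terms. Finally, `ρ - y = ρ σ(t)`. -/

section Charlier

open PowerSeries

variable {R : Type*} [CommRing R]

lemma coeff_one_sub_X_pow (k j : ℕ) : coeff j ((1 - X : R⟦X⟧) ^ k) = k.choose j * (-1) ^ j := by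
  have hrescale : (1 - X : R⟦X⟧) ^ k =
      rescale (-1) (((1 + Polynomial.X : Polynomial R) ^ k : Polynomial R) : R⟦X⟧) := by
    simp [rescale_X, sub_eq_add_neg]
  rw [hrescale, coeff_rescale, Polynomial.coeff_coe, Polynomial.coeff_one_add_X_pow, mul_comm]

variable [Algebra ℚ R]

lemma derivative_rescale_exp (a : R) :
    derivative R (rescale a (exp R)) = C a * rescale a (exp R) := by
  ext n
  have h := congrArg (coeff n) (derivative_exp R)
  rw [coeff_derivative] at h
  rw [coeff_derivative, coeff_C_mul, coeff_rescale, coeff_rescale]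
  linear_combination a ^ (n + 1) * h

/-- The generating function `(1 - X)ᵏ e^{aX}` of the Charlier polynomials at `k`. -/
noncomputable def charlierSeries (a : R) (k : ℕ) : R⟦X⟧ :=
  (1 - X) ^ k * rescale a (exp R)

/-- The Charlier polynomial of degree `n` with parameter `a`, evaluated at `k`. In terms of the
classical normalization `C_n(k; a)`, it is `aⁿ/n! C_n(k; a)`. -/
noncomputable def charlier (a : R) (n k : ℕ) : R :=
  coeff n (charlierSeries a k)

@[simp]
lemma charlier_zero (a : R) (k : ℕ) : charlier a 0 k = 1 := by
  simp [charlier, charlierSeries, coeff_mul, coeff_rescale, coeff_one_sub_X_pow,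
    -coeff_zero_eq_constantCoeff]

lemma charlier_succ_succ (a : R) (n k : ℕ) :
    charlier a (n + 1) (k + 1) = charlier a (n + 1) k - charlier a n k := by
  have hseries : charlierSeries a (k + 1) = charlierSeries a k - charlierSeries a k * X := by
    simp only [charlierSeries]
    ring
  simp only [charlier, hseries, map_sub, coeff_succ_mul_X]

lemma derivative_charlierSeries (a : R) (k : ℕ) :
    derivative R (charlierSeries a k) =
      C a * charlierSeries a k - C (k : R) * charlierSeries a (k - 1) := by
  simp only [charlierSeries, Derivation.leibniz, derivative_pow, derivative_rescale_exp, map_sub,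
    derivative_one, derivative_X, smul_eq_mul, map_natCast]
  ring

lemma succ_mul_charlier_succ (a : R) (n k : ℕ) :
    (n + 1) * charlier a (n + 1) k = a * charlier a n k - k * charlier a n (k - 1) := by
  have h := congrArg (coeff n) (derivative_charlierSeries a k)
  rwa [coeff_derivative, map_sub, coeff_C_mul, coeff_C_mul, mul_comm] at h

variable {K : Type*} [Field K] [Algebra ℚ K]

lemma coeff_rescale_exp (a : K) (n : ℕ) : coeff n (rescale a (exp K)) = a ^ n / n.factorial := by
  simp [coeff_rescale, coeff_exp, div_eq_mul_inv]

lemma succ_mul_pow_succ_div_factorial (a : K) (n : ℕ) :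
    (n + 1) * (a ^ (n + 1) / (n + 1).factorial) = a * (a ^ n / n.factorial) := by
  have h := congrArg (coeff n) (derivative_rescale_exp a)
  rwa [coeff_derivative, coeff_C_mul, coeff_rescale_exp, coeff_rescale_exp, mul_comm] at h

lemma charlier_eq_sum (a : K) (n k : ℕ) :
    charlier a n k =
      ∑ j ∈ range (n + 1), k.choose j * (-1) ^ j * (a ^ (n - j) / (n - j).factorial) := by
  simp only [charlier, charlierSeries, coeff_mul, coeff_one_sub_X_pow, coeff_rescale_exp,
    Nat.sum_antidiagonal_eq_sum_range_succ_mk]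

lemma charlier_eq_sum_charlier (a b : K) (n k : ℕ) :
    charlier a n k =
      ∑ j ∈ range (n + 1), charlier b j k * ((a - b) ^ (n - j) / (n - j).factorial) := by
  have hseries : charlierSeries a k = charlierSeries b k * rescale (a - b) (exp K) := by
    rw [charlierSeries, charlierSeries, mul_assoc, exp_mul_exp_eq_exp_add, add_sub_cancel]
  simp only [charlier, hseries, coeff_mul, coeff_rescale_exp,
    Nat.sum_antidiagonal_eq_sum_range_succ_mk]

end Charlier

section Summation

variable {𝕜 : Type*} [NormedField 𝕜] [NormedAlgebra ℚ 𝕜]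

lemma hasSum_pow_div_factorial_natCast_mul {y s : 𝕜} {f : ℕ → 𝕜}
    (hf : HasSum (fun k => y ^ k / k.factorial * f (k + 1)) s) :
    HasSum (fun k => y ^ k / k.factorial * (k * f k)) (y * s) := by
  rw [← hasSum_nat_add_iff' 1]
  simp only [range_one, sum_singleton, Nat.cast_zero, zero_mul, mul_zero, sub_zero]
  refine (hf.mul_left y).congr_fun fun k => ?_
  push_cast
  linear_combination f (k + 1) * succ_mul_pow_succ_div_factorial y k

lemma hasSum_mul_charlier_succ {y s s' : 𝕜} {g : ℕ → 𝕜} {n : ℕ}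
    (hs : HasSum (fun k => y ^ k / k.factorial * (g k * charlier y n k)) s)
    (hs' : HasSum (fun k => y ^ k / k.factorial * (g (k + 1) * charlier y n k)) s') :
    HasSum (fun k => y ^ k / k.factorial * (g k * charlier y (n + 1) k))
      (y * (s - s') / (n + 1)) := by
  have hn : (n + 1 : 𝕜) ≠ 0 := have := algebraRat.charZero 𝕜; Nat.cast_add_one_ne_zero n
  have hshift := hasSum_pow_div_factorial_natCast_mul
    (f := fun k => g k * charlier y n (k - 1)) hs'
  rw [mul_sub]
  refine (((hs.mul_left y).sub hshift).div_const (n + 1 : 𝕜)).congr_fun fun k => ?_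
  rw [eq_div_iff hn]
  linear_combination y ^ k / k.factorial * g k * succ_mul_charlier_succ y n k

variable [CompleteSpace 𝕜]

lemma hasSum_charlier (y : 𝕜) (n : ℕ) :
    HasSum (fun k => y ^ k / k.factorial * charlier y n k)
      (if n = 0 then NormedSpace.exp y else 0) := by
  induction n with
  | zero => simpa using NormedSpace.expSeries_div_hasSum_exp y
  | succ n ih =>
    have h : HasSum (fun k => y ^ k / k.factorial * (1 * charlier y n k))
        (if n = 0 then NormedSpace.exp y else 0) := by
      simpa only [one_mul] using ih
    simpa using hasSum_mul_charlier_succ (g := fun _ => 1) h h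

theorem hasSum_charlier_orthogonality (y : 𝕜) (m n : ℕ) :
    HasSum (fun k => y ^ k / k.factorial * (charlier y m k * charlier y n k))
      (if m = n then NormedSpace.exp y * (y ^ n / n.factorial) else 0) := by
  induction n generalizing m with
  | zero => simpa using hasSum_charlier y m
  | succ n ih =>
    cases m with
    | zero => simpa using hasSum_charlier y (n + 1)
    | succ m =>
      have hdiff : HasSum
          (fun k => y ^ k / k.factorial * (charlier y (m + 1) (k + 1) * charlier y n k))
          ((if m + 1 = n then NormedSpace.exp y * (y ^ n / n.factorial) else 0) -
            if m = n then NormedSpace.exp y * (y ^ n / n.factorial) else 0) := by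
        refine ((ih (m + 1)).sub (ih m)).congr_fun fun k => ?_
        rw [charlier_succ_succ]
        ring
      convert hasSum_mul_charlier_succ (ih (m + 1)) hdiff using 1
      have hn : (n + 1 : 𝕜) ≠ 0 := have := algebraRat.charZero 𝕜; Nat.cast_add_one_ne_zero n
      simp only [sub_sub_cancel, add_left_inj, eq_div_iff hn]
      split_ifs
      · linear_combination NormedSpace.exp y * succ_mul_pow_succ_div_factorial y n
      · simp

theorem hasSum_charlier_mul_charlier (a b y : 𝕜) (m n : ℕ) :
    HasSum (fun k => y ^ k / k.factorial * (charlier a m k * charlier b n k))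
      (NormedSpace.exp y * ∑ j ∈ range (min m n + 1), y ^ j / j.factorial *
        ((a - y) ^ (m - j) / (m - j).factorial * ((b - y) ^ (n - j) / (n - j).factorial))) := by
  have h := hasSum_sum (s := range (m + 1)) fun i _ => hasSum_sum (s := range (n + 1)) fun j _ =>
    (hasSum_charlier_orthogonality y i j).mul_right
      ((a - y) ^ (m - i) / (m - i).factorial * ((b - y) ^ (n - j) / (n - j).factorial))
  have hrange : range (min m n + 1) = {i ∈ range (m + 1) | i ∈ range (n + 1)} := by
    ext i
    simp only [mem_filter, mem_range]
    omega
  simp only [ite_mul, zero_mul, sum_ite_eq, ← sum_filter, ← hrange,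
    mul_assoc (NormedSpace.exp y), ← mul_sum (a := NormedSpace.exp y)] at h
  refine h.congr_fun fun k => ?_
  rw [charlier_eq_sum_charlier a y, charlier_eq_sum_charlier b y, sum_mul_sum]
  simp only [mul_sum]
  refine sum_congr rfl fun i _ => sum_congr rfl fun j _ => ?_
  ring

end Summation

lemma erlFneg_eq_charlier (ρ : ℝ) (n k : ℕ) : erlFneg ρ n k = charlier ρ n k := by
  simp only [erlFneg, charlier_eq_sum, mul_div_assoc]
  refine sum_subset (range_subset_range.2 (by omega)) fun j hj hj' => ?_
  rw [mem_range] at hj hj'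
  rw [Nat.choose_eq_zero_of_lt (by omega)]
  simp

lemma exp_neg_natCast_mul (k : ℕ) (t : ℝ) : Real.exp (-(k : ℝ) * t) = Real.exp (-t) ^ k := by
  rw [← Real.exp_nat_mul, neg_mul_comm]

lemma exp_mul_pow_div_factorial_mul_pMMinf (ρ : ℝ) (n₀ n : ℕ) (t : ℝ) :
    Real.exp ρ * (ρ ^ n₀ / n₀.factorial) * pMMinf ρ n₀ n t =
      Real.exp (ρ * Real.exp (-t)) * ∑ j ∈ range (min n₀ n + 1),
        (ρ * Real.exp (-t)) ^ j / j.factorial *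
          ((ρ * sigmaMMinf t) ^ (n₀ - j) / (n₀ - j).factorial *
            ((ρ * sigmaMMinf t) ^ (n - j) / (n - j).factorial)) := by
  have hexp : Real.exp ρ * Real.exp (-ρ * sigmaMMinf t) = Real.exp (ρ * Real.exp (-t)) := by
    rw [← Real.exp_add, sigmaMMinf]
    congr 1
    ring
  rw [pMMinf, mul_mul_mul_comm, hexp, mul_sum, min_comm]
  congr 1
  refine sum_congr rfl fun j hj => ?_
  have hle : j ≤ n₀ ∧ j ≤ n := by
    rw [mem_range] at hj
    omega
  obtain ⟨c, rfl⟩ := Nat.exists_eq_add_of_le hle.1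
  obtain ⟨d, rfl⟩ := Nat.exists_eq_add_of_le hle.2
  have hexponent : j + d + (j + c) - 2 * j = d + c := by omega
  rw [hexponent, exp_neg_natCast_mul, Nat.cast_add_choose, Nat.add_sub_cancel_left,
    Nat.add_sub_cancel_left]
  field_simp
  ring

theorem spectral_representation_MMinf_general (ρ : ℝ) (n₀ n : ℕ) (t : ℝ) :
    HasSum (fun k : ℕ =>
      ρ ^ k / k.factorial * Real.exp (-(k : ℝ) * t) * erlFneg ρ n₀ k * erlFneg ρ n k)
      (Real.exp ρ * (ρ ^ n₀ / n₀.factorial) * pMMinf ρ n₀ n t) := by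
  have hsigma : ρ - ρ * Real.exp (-t) = ρ * sigmaMMinf t := by
    rw [sigmaMMinf]
    ring
  have h := hasSum_charlier_mul_charlier ρ ρ (ρ * Real.exp (-t)) n₀ n
  rw [hsigma, ← Real.exp_eq_exp_ℝ, ← exp_mul_pow_div_factorial_mul_pMMinf] at h
  refine h.congr_fun fun k => ?_
  rw [exp_neg_natCast_mul, erlFneg_eq_charlier, erlFneg_eq_charlier]
  ring

/-- the spectral series
(n₀! e^{−ρ}/ρ^{n₀}) Σ_{k=0}^{∞} (ρ^k/k!) e^{−kt} F_{n₀}(−k) F_n(−k)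
converges and equals the closed form p_n(t). -/
theorem spectral_representation_MMinf (ρ : ℝ) (hρ : 0 < ρ) (n₀ n : ℕ)
    (t : ℝ) (ht : 0 ≤ t) :
    Summable (fun k : ℕ =>
      ρ ^ k / k.factorial * Real.exp (-(k : ℝ) * t) * erlFneg ρ n₀ k * erlFneg ρ n k)
    ∧ (n₀.factorial : ℝ) * Real.exp (-ρ) / ρ ^ n₀ *
        ∑' k : ℕ,
          ρ ^ k / k.factorial * Real.exp (-(k : ℝ) * t) * erlFneg ρ n₀ k * erlFneg ρ n k
      = pMMinf ρ n₀ n t := by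
  have h := spectral_representation_MMinf_general ρ n₀ n t
  refine ⟨h.summable, ?_⟩
  rw [h.tsum_eq, Real.exp_neg]
  field_simp
end

section
/- Fix a real ρ > 0 and a natural number n₀. For every real t ≥ 0 and every real u, the series Σ_{n=0}^{∞} p_n(t) u^n converges and equals exp[ρ(1 − e^{−t})(u − 1)] · [1 + (u − 1)e^{−t}]^{n₀}, where p_n(t) = e^{−ρσ(t)} Σ_{j=0}^{min(n,n₀)} C(n₀,j) e^{−jt} ρ^{n−j} σ(t)^{n+n₀−2j}/(n−j)! and σ(t) = 1 − e^{−t}. -/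
/-!
For a summation index `j ≤ n₀` the exponents regroup as `n + n₀ - 2j = (n - j) + (n₀ - j)`, so
`pₙ(t) uⁿ` is, up to the factor `exp (-ρσ)`, the `n`-th term of the Cauchy product of the finite
binomial expansion of `(u e⁻ᵗ + σ)^n₀` with the exponential series of `ρσu`. In probabilistic terms,
the customers still present out of the initial `n₀` and those who arrived later are independent,
binomial and Poisson respectively.
-/

open Finset

theorem hasSum_pow_mul_pow_mul_choose {R : Type*} [Semiring R] [TopologicalSpace R] {x y : R}
    (h : Commute x y) (m : ℕ) :
    HasSum (fun j ↦ x ^ j * y ^ (m - j) * (m.choose j : R)) ((x + y) ^ m) := by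
  rw [h.add_pow]
  refine hasSum_sum_of_ne_finset_zero fun j hj ↦ ?_
  rw [Nat.choose_eq_zero_of_lt (by simpa [Nat.lt_succ_iff] using hj), Nat.cast_zero, mul_zero]

theorem summable_norm_pow_mul_pow_mul_choose {R : Type*} [SeminormedRing R] (x y : R) (m : ℕ) :
    Summable fun j ↦ ‖x ^ j * y ^ (m - j) * (m.choose j : R)‖ := by
  refine summable_of_ne_finset_zero (s := range (m + 1)) fun j hj ↦ ?_
  rw [Nat.choose_eq_zero_of_lt (by simpa [Nat.lt_succ_iff] using hj), Nat.cast_zero, mul_zero,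
    norm_zero]

theorem hasSum_add_pow_mul_exp {𝕜 : Type*} [NormedDivisionRing 𝕜] [NormedAlgebra ℚ 𝕜]
    [CompleteSpace 𝕜] {x y : 𝕜} (h : Commute x y) (z : 𝕜) (m : ℕ) :
    HasSum
      (fun n ↦ ∑ j ∈ range (n + 1),
        x ^ j * y ^ (m - j) * (m.choose j : 𝕜) * (z ^ (n - j) / ((n - j).factorial : 𝕜)))
      ((x + y) ^ m * NormedSpace.exp z) := by
  have h_prod := hasSum_sum_range_mul_of_summable_norm
    (summable_norm_pow_mul_pow_mul_choose x y m) (NormedSpace.norm_expSeries_div_summable z)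
  rwa [(hasSum_pow_mul_pow_mul_choose h m).tsum_eq,
    (NormedSpace.expSeries_div_hasSum_exp z).tsum_eq] at h_prod

theorem sum_range_min_succ_choose_mul {R : Type*} [NonAssocSemiring R] (m n : ℕ) (f : ℕ → R) :
    ∑ j ∈ range (min n m + 1), (m.choose j : R) * f j =
      ∑ j ∈ range (n + 1), (m.choose j : R) * f j := by
  refine sum_subset (range_subset_range.2 (by omega)) fun j hj hj_min ↦ ?_
  have hmj : m < j := by
    simp only [mem_range] at hj hj_min
    omega
  rw [Nat.choose_eq_zero_of_lt hmj, Nat.cast_zero, zero_mul]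

theorem pMMinf_mul_pow (ρ : ℝ) (n₀ n : ℕ) (t u : ℝ) :
    pMMinf ρ n₀ n t * u ^ n =
      Real.exp (-ρ * sigmaMMinf t) *
        ∑ j ∈ range (n + 1),
          (u * Real.exp (-t)) ^ j * sigmaMMinf t ^ (n₀ - j) * (n₀.choose j : ℝ) *
            ((ρ * sigmaMMinf t * u) ^ (n - j) / ((n - j).factorial : ℝ)) := by
  have h_regroup : ∀ j ∈ range (min n n₀ + 1),
      (n₀.choose j : ℝ) * Real.exp (-(j : ℝ) * t) * ρ ^ (n - j) *
          sigmaMMinf t ^ (n + n₀ - 2 * j) / (n - j).factorial * u ^ n =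
        (n₀.choose j : ℝ) * ((u * Real.exp (-t)) ^ j * sigmaMMinf t ^ (n₀ - j) *
          ((ρ * sigmaMMinf t * u) ^ (n - j) / ((n - j).factorial : ℝ))) := by
    intro j hj
    have h_le : j ≤ n ∧ j ≤ n₀ := by simpa [Nat.lt_succ_iff] using hj
    have h_exp : Real.exp (-(j : ℝ) * t) = Real.exp (-t) ^ j := by
      rw [← Real.exp_nat_mul, neg_mul_comm]
    have h_sigma : n + n₀ - 2 * j = (n - j) + (n₀ - j) := by omega
    have h_pow : u ^ n = u ^ j * u ^ (n - j) := by rw [← pow_add, Nat.add_sub_cancel' h_le.1]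
    rw [h_exp, h_sigma, h_pow]
    ring
  rw [pMMinf, mul_assoc, sum_mul, sum_congr rfl h_regroup, sum_range_min_succ_choose_mul]
  congr 1
  exact sum_congr rfl fun j _ ↦ by ring

theorem pMMinf_generating_function_general (ρ : ℝ) (n₀ : ℕ) (t u : ℝ) :
    HasSum (fun n ↦ pMMinf ρ n₀ n t * u ^ n)
      (Real.exp (ρ * (1 - Real.exp (-t)) * (u - 1)) * (1 + (u - 1) * Real.exp (-t)) ^ n₀) := by
  have h_closed :
      Real.exp (ρ * (1 - Real.exp (-t)) * (u - 1)) * (1 + (u - 1) * Real.exp (-t)) ^ n₀ =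
        Real.exp (-ρ * sigmaMMinf t) *
          ((u * Real.exp (-t) + sigmaMMinf t) ^ n₀ * Real.exp (ρ * sigmaMMinf t * u)) := by
    rw [mul_left_comm, ← Real.exp_add, mul_comm, sigmaMMinf]
    congr 2 <;> ring
  have h_cauchy := hasSum_add_pow_mul_exp
    (Commute.all (u * Real.exp (-t)) (sigmaMMinf t)) (ρ * sigmaMMinf t * u) n₀
  rw [← Real.exp_eq_exp_ℝ] at h_cauchy
  simpa only [h_closed, pMMinf_mul_pow] using h_cauchy.mul_left (Real.exp (-ρ * sigmaMMinf t))

/-- for every t ≥ 0 and every real u, the series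
Σ_{n=0}^{∞} p_n(t) u^n converges and equals
exp[ρ(1 − e^{−t})(u − 1)] · [1 + (u − 1)e^{−t}]^{n₀}. -/
theorem pMMinf_generating_function (ρ : ℝ) (hρ : 0 < ρ) (n₀ : ℕ)
    (t : ℝ) (ht : 0 ≤ t) (u : ℝ) :
    Summable (fun n : ℕ => pMMinf ρ n₀ n t * u ^ n)
    ∧ ∑' n : ℕ, pMMinf ρ n₀ n t * u ^ n
      = Real.exp (ρ * (1 - Real.exp (-t)) * (u - 1)) *
          (1 + (u - 1) * Real.exp (-t)) ^ n₀ := by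
  have h := pMMinf_generating_function_general ρ n₀ t u
  exact ⟨h.summable, h.tsum_eq⟩
end

section
/- Fix reals ρ > 0 and θ > 0 and natural numbers m ≥ 1 and 0 ≤ n₀ ≤ m. Suppose P̂_0, …, P̂_m are real numbers satisfying: P̂_1 − (ρ+θ) P̂_0 = −δ(0,n₀); (n+1) P̂_{n+1} + ρ P̂_{n−1} − (ρ+θ+n) P̂_n = −δ(n,n₀) for 1 ≤ n ≤ m−1; and ρ P̂_{m−1} − (θ+m) P̂_m = −δ(m,n₀). Then P̂_m = [Σ_{ℓ=0}^{n₀} C(n₀,ℓ) ρ^{−ℓ} Γ(θ+ℓ)] / [Σ_{ℓ=0}^{m} C(m,ℓ) ρ^{−ℓ} Γ(θ+ℓ+1)], where Γ is the real Gamma function and C(·,·) the binomial coefficient. -/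
open Finset

/-!
The idea is duality. Pair the forward system with the vector
`f n = ∑ ℓ, C(n, ℓ) ρ^(-ℓ) Γ(θ + ℓ)`, which up to the factor `Γ(θ)` is the Charlier polynomial
`C_n(-θ; ρ)`. This `f` solves the adjoint (backward) equation
`ρ f (n + 1) + n f (n - 1) = (ρ + θ + n) f n` at every state below `m`, so the pairing leaves
`f n₀` from the source and, from the last equation, `P m` times the defect
`(θ + m) f m - m f (m - 1)`. By `Γ(x + 1) = x Γ(x)`, this defect is the binomial sum with `θ + 1`
in place of `θ`.
-/

section Tridiagonal

variable {R : Type*} [CommRing R] {b d q s P f : ℕ → R} {k : ℕ}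

/-- The left-hand side is the Casoratian of `P` and `f`, the discrete analogue of a Wronskian. -/
theorem tridiagonal_casoratian_eq_neg_sum
    (hP_zero : d 0 * P 1 - q 0 * P 0 = -s 0)
    (hP : ∀ n < k, d (n + 1) * P (n + 2) + b n * P n - q (n + 1) * P (n + 1) = -s (n + 1))
    (hf_zero : b 0 * f 1 = q 0 * f 0)
    (hf : ∀ n < k, b (n + 1) * f (n + 2) + d n * f n = q (n + 1) * f (n + 1)) :
    d k * P (k + 1) * f k - b k * P k * f (k + 1) = -∑ n ∈ range (k + 1), s n * f n := by
  induction k with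
  | zero =>
    rw [zero_add, sum_range_one]
    linear_combination f 0 * hP_zero - P 0 * hf_zero
  | succ k ih =>
    have ih := ih (fun n hn ↦ hP n (by omega)) (fun n hn ↦ hf n (by omega))
    rw [sum_range_succ]
    linear_combination ih + f (k + 1) * hP k (by omega) - P (k + 1) * hf k (by omega)

theorem tridiagonal_last_mul_defect_eq_sum {q' : R}
    (hP_zero : d 0 * P 1 - q 0 * P 0 = -s 0)
    (hP : ∀ n < k, d (n + 1) * P (n + 2) + b n * P n - q (n + 1) * P (n + 1) = -s (n + 1))
    (hP_last : b k * P k - q' * P (k + 1) = -s (k + 1))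
    (hf_zero : b 0 * f 1 = q 0 * f 0)
    (hf : ∀ n < k, b (n + 1) * f (n + 2) + d n * f n = q (n + 1) * f (n + 1)) :
    P (k + 1) * (q' * f (k + 1) - d k * f k) = ∑ n ∈ range (k + 2), s n * f n := by
  rw [sum_range_succ]
  linear_combination -f (k + 1) * hP_last -
    tridiagonal_casoratian_eq_neg_sum hP_zero hP hf_zero hf

end Tridiagonal

/-- The binomial transform of the sequence `ℓ ↦ r ^ ℓ * g ℓ`. For `r = ρ⁻¹`, the numerator and the
denominator of the blocking transform are its values at the sequences `g ℓ = Γ(θ + ℓ)` and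
`ℓ ↦ g (ℓ + 1)`. -/
def weightedBinomialTransform {R : Type*} [Semiring R] (r : R) (g : ℕ → R) (n : ℕ) : R :=
  ∑ ℓ ∈ range (n + 1), (n.choose ℓ : R) * r ^ ℓ * g ℓ

theorem mul_choose_add_mul_choose_eq (n ℓ : ℕ) :
    ℓ * (n + 1).choose ℓ + (n + 1) * n.choose ℓ = (n + 1) * (n + 1).choose ℓ := by
  cases ℓ with
  | zero => simp
  | succ ℓ =>
    rw [mul_comm (ℓ + 1), ← Nat.add_one_mul_choose_eq, Nat.choose_succ_succ', mul_add]

namespace weightedBinomialTransform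

section CommSemiring

variable {R : Type*} [CommSemiring R]

theorem succ_eq_add (r : R) (g : ℕ → R) (n : ℕ) :
    weightedBinomialTransform r g (n + 1) =
      weightedBinomialTransform r g n + r * weightedBinomialTransform r (fun ℓ ↦ g (ℓ + 1)) n := by
  simp only [weightedBinomialTransform, mul_assoc, mul_sum]
  rw [sum_choose_succ_mul (fun ℓ _ ↦ r ^ ℓ * g ℓ)]
  congr 1
  exact sum_congr rfl fun ℓ _ ↦ by ring

theorem eq_sum_range_add_two (r : R) (g : ℕ → R) (n : ℕ) :
    weightedBinomialTransform r g n = ∑ ℓ ∈ range (n + 2), (n.choose ℓ : R) * r ^ ℓ * g ℓ := by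
  simp [weightedBinomialTransform, sum_range_succ _ (n + 1)]

variable {θ : R} {g : ℕ → R}

theorem shift_zero (r : R) (hg : g 1 = θ * g 0) :
    weightedBinomialTransform r (fun ℓ ↦ g (ℓ + 1)) 0 = θ * weightedBinomialTransform r g 0 := by
  simp [weightedBinomialTransform, hg]

theorem shift_succ_add (r : R) (hg : ∀ ℓ, g (ℓ + 1) = (θ + ℓ) * g ℓ) (n : ℕ) :
    weightedBinomialTransform r (fun ℓ ↦ g (ℓ + 1)) (n + 1) +
        (n + 1) * weightedBinomialTransform r g n =
      (θ + (n + 1 : ℕ)) * weightedBinomialTransform r g (n + 1) := by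
  rw [eq_sum_range_add_two r g n]
  simp only [weightedBinomialTransform, mul_sum, ← sum_add_distrib]
  refine sum_congr rfl fun ℓ _ ↦ ?_
  have hchoose : (ℓ : R) * ((n + 1).choose ℓ : R) + ((n : R) + 1) * (n.choose ℓ : R) =
      ((n : R) + 1) * ((n + 1).choose ℓ : R) :=
    mod_cast congrArg (Nat.cast (R := R)) (mul_choose_add_mul_choose_eq n ℓ)
  calc (n + 1).choose ℓ * r ^ ℓ * g (ℓ + 1) + (n + 1) * (n.choose ℓ * r ^ ℓ * g ℓ)
      = (θ * (n + 1).choose ℓ + (ℓ * (n + 1).choose ℓ + (n + 1) * n.choose ℓ)) *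
          (r ^ ℓ * g ℓ) := by rw [hg]; ring
    _ = (θ + (n + 1 : ℕ)) * ((n + 1).choose ℓ * r ^ ℓ * g ℓ) := by
      rw [hchoose]; push_cast; ring

variable {ρ r : R}

theorem backward_zero (hρ : ρ * r = 1) (hg : g 1 = θ * g 0) :
    ρ * weightedBinomialTransform r g 1 = (ρ + θ) * weightedBinomialTransform r g 0 := by
  calc ρ * weightedBinomialTransform r g 1
      = ρ * weightedBinomialTransform r g 0 +
          ρ * r * weightedBinomialTransform r (fun ℓ ↦ g (ℓ + 1)) 0 := by
        rw [← zero_add 1, succ_eq_add]; ring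
    _ = (ρ + θ) * weightedBinomialTransform r g 0 := by rw [hρ, shift_zero r hg]; ring

theorem backward_succ (hρ : ρ * r = 1) (hg : ∀ ℓ, g (ℓ + 1) = (θ + ℓ) * g ℓ) (n : ℕ) :
    ρ * weightedBinomialTransform r g (n + 2) + (n + 1) * weightedBinomialTransform r g n =
      (ρ + θ + (n + 1 : ℕ)) * weightedBinomialTransform r g (n + 1) := by
  calc ρ * weightedBinomialTransform r g (n + 2) + (n + 1) * weightedBinomialTransform r g n
      = ρ * weightedBinomialTransform r g (n + 1) +
          (ρ * r * weightedBinomialTransform r (fun ℓ ↦ g (ℓ + 1)) (n + 1) +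
            (n + 1) * weightedBinomialTransform r g n) := by rw [succ_eq_add r g (n + 1)]; ring
    _ = (ρ + θ + (n + 1 : ℕ)) * weightedBinomialTransform r g (n + 1) := by
      rw [hρ, one_mul, shift_succ_add r hg]; ring

end CommSemiring

protected theorem pos {R : Type*} [Semiring R] [PartialOrder R] [IsStrictOrderedRing R]
    {r : R} {g : ℕ → R} (hr : 0 < r) (hg : ∀ ℓ, 0 < g ℓ) (n : ℕ) :
    0 < weightedBinomialTransform r g n := by
  refine sum_pos (fun ℓ hℓ ↦ ?_) nonempty_range_add_one
  have hchoose : 0 < n.choose ℓ := Nat.choose_pos (mem_range_succ_iff.mp hℓ)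
  exact mul_pos (mul_pos (Nat.cast_pos.mpr hchoose) (pow_pos hr ℓ)) (hg ℓ)

theorem gamma_pos {ρ θ : ℝ} (hρ : 0 < ρ) (hθ : 0 < θ) (n : ℕ) :
    0 < weightedBinomialTransform ρ⁻¹ (fun ℓ ↦ Real.Gamma (θ + (ℓ + 1 : ℕ))) n :=
  weightedBinomialTransform.pos (inv_pos.mpr hρ) (fun _ ↦ Real.Gamma_pos_of_pos (by positivity)) n

end weightedBinomialTransform

theorem gamma_add_natCast_succ {θ : ℝ} (hθ : 0 < θ) (ℓ : ℕ) :
    Real.Gamma (θ + (ℓ + 1 : ℕ)) = (θ + ℓ) * Real.Gamma (θ + ℓ) := by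
  rw [Nat.cast_add_one, ← add_assoc, Real.Gamma_add_one (by positivity)]

open weightedBinomialTransform in
/-- The source `s` replaces the point mass at `n₀`, and `g ℓ` stands for `Γ(θ + ℓ)`. -/
theorem erlang_loss_blocking_transform_gamma_general {R : Type*} [CommRing R] {ρ r θ : R}
    (hρ : ρ * r = 1) {g : ℕ → R} (hg : ∀ ℓ : ℕ, g (ℓ + 1) = (θ + ℓ) * g ℓ)
    {m : ℕ} (hm : 1 ≤ m) {s P : ℕ → R}
    (h0 : P 1 - (ρ + θ) * P 0 = -s 0)
    (hmid : ∀ n : ℕ, 1 ≤ n → n ≤ m - 1 →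
      ((n : R) + 1) * P (n + 1) + ρ * P (n - 1) - (ρ + θ + n) * P n = -s n)
    (htop : ρ * P (m - 1) - (θ + m) * P m = -s m) :
    P m * weightedBinomialTransform r (fun ℓ ↦ g (ℓ + 1)) m =
      ∑ n ∈ range (m + 1), s n * weightedBinomialTransform r g n := by
  obtain ⟨k, rfl⟩ := Nat.exists_eq_add_of_le' hm
  have hg_one : g 1 = θ * g 0 := by simpa using hg 0
  rw [eq_sub_of_add_eq (shift_succ_add r hg k)]
  exact tridiagonal_last_mul_defect_eq_sum (b := fun _ ↦ ρ) (d := fun n ↦ n + 1)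
    (q := fun n ↦ ρ + θ + n) (by simpa using h0) (fun n hn ↦ hmid (n + 1) (by omega) (by omega))
    htop (by simpa using backward_zero hρ hg_one) (fun n _ ↦ backward_succ hρ hg n)

/-- if P̂_0, …, P̂_m solve the Laplace-transformed forward Kolmogorov
system of the M/M/m/m loss model started in state n₀ ≤ m, then
P̂_m = [Σ_{ℓ=0}^{n₀} C(n₀,ℓ) ρ^{−ℓ} Γ(θ+ℓ)] / [Σ_{ℓ=0}^{m} C(m,ℓ) ρ^{−ℓ} Γ(θ+ℓ+1)]. -/
theorem erlang_loss_blocking_transform_gamma (ρ θ : ℝ) (hρ : 0 < ρ) (hθ : 0 < θ)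
    (m n₀ : ℕ) (hm : 1 ≤ m) (hn₀ : n₀ ≤ m) (P : ℕ → ℝ)
    (h0 : P 1 - (ρ + θ) * P 0 = -(if 0 = n₀ then (1 : ℝ) else 0))
    (hmid : ∀ n : ℕ, 1 ≤ n → n ≤ m - 1 →
      ((n : ℝ) + 1) * P (n + 1) + ρ * P (n - 1) - (ρ + θ + n) * P n
        = -(if n = n₀ then (1 : ℝ) else 0))
    (htop : ρ * P (m - 1) - (θ + m) * P m = -(if m = n₀ then (1 : ℝ) else 0)) :
    P m = (∑ ℓ ∈ Finset.range (n₀ + 1),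
            (n₀.choose ℓ : ℝ) * ρ ^ (-(ℓ : ℤ)) * Real.Gamma (θ + ℓ))
      / (∑ ℓ ∈ Finset.range (m + 1),
            (m.choose ℓ : ℝ) * ρ ^ (-(ℓ : ℤ)) * Real.Gamma (θ + ℓ + 1)) := by
  have hpairing : P m * weightedBinomialTransform ρ⁻¹ (fun ℓ ↦ Real.Gamma (θ + (ℓ + 1 : ℕ))) m =
      weightedBinomialTransform ρ⁻¹ (fun ℓ ↦ Real.Gamma (θ + ℓ)) n₀ := by
    simpa [Nat.lt_succ_of_le hn₀] using
      erlang_loss_blocking_transform_gamma_general (g := fun ℓ ↦ Real.Gamma (θ + ℓ))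
        (s := fun n ↦ if n = n₀ then 1 else 0) (mul_inv_cancel₀ hρ.ne')
        (gamma_add_natCast_succ hθ) hm h0 hmid htop
  have hden := weightedBinomialTransform.gamma_pos hρ hθ m
  simpa [weightedBinomialTransform, add_assoc] using eq_div_of_mul_eq hden.ne' hpairing
end

section
/- Fix reals ρ > 0 and θ > 0 and natural numbers 1 ≤ m < n*. Let Δ = (m+ρ+θ)² − 4mρ > 0, Z₊ = [ρ+θ+m + √Δ]/(2ρ), Z₋ = [ρ+θ+m − √Δ]/(2ρ), and let D = ρ F_m(θ)[Z₊ Z₋^{n*−m} − Z₋ Z₊^{n*−m}] + (m+1) F_{m+1}(θ)[Z₊^{n*−m} − Z₋^{n*−m}]; assume D ≠ 0. Define Q̂_n = ρ^{m−n}(n!/m!) √Δ F_n(θ)/D for 0 ≤ n ≤ m, and Q̂_n = (ρ F_m(θ)[Z₊ Z₋^{n−m} − Z₋ Z₊^{n−m}] + (m+1) F_{m+1}(θ)[Z₊^{n−m} − Z₋^{n−m}])/D for m ≤ n ≤ n*. Then the two formulas agree at n = m, and: Q̂_{n*} = 1; ρ Q̂_1 = (ρ+θ) Q̂_0; (ρ+n+θ)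 Q̂_n = ρ Q̂_{n+1} + n Q̂_{n−1} for 1 ≤ n ≤ m; and (ρ+m+θ) Q̂_n = ρ Q̂_{n+1} + m Q̂_{n−1} for m ≤ n ≤ n*−1. -/
open Finset

/-! The generating series `∑ Fₙ(θ) Xⁿ = exp (ρ X) (1 - X)⁻ᶿ` satisfies
`(1 - X) G' = (ρ (1 - X) + θ) G`, which says that `n! ρ⁻ⁿ Fₙ(θ)` solves the Kolmogorov recurrence
with death rate `n`. For death rate `m` the recurrence has constant coefficients and characteristic
roots `Z₊`, `Z₋`. Both recurrences have order two, so a solution of the first up to level `m` is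
continued by the solution of the second that agrees with it at `m` and `m + 1`. -/

namespace MMmFirstPassage

open PowerSeries
open scoped Nat

section GeneratingSeries

variable {K : Type*} [Field K] [CharZero K]

/-- The power series `(1 - X)⁻ᶿ`, defined by its coefficients so that `θ` is an arbitrary scalar. -/
noncomputable def risingSeries (θ : K) : K⟦X⟧ :=
  mk fun n ↦ (ascPochhammer K n).eval θ / n !

theorem one_sub_X_mul_derivative_risingSeries (θ : K) :
    (1 - X) * d⁄dX K (risingSeries θ) = C θ * risingSeries θ := by
  have coeff_derivative_rising (n : ℕ) :
      coeff n (d⁄dX K (risingSeries θ)) = (θ + n) * coeff n (risingSeries θ) := by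
    have : (n : K) + 1 ≠ 0 := n.cast_add_one_ne_zero
    rw [coeff_derivative, risingSeries, coeff_mk, coeff_mk, ascPochhammer_succ_eval,
      Nat.factorial_succ]
    push_cast
    field_simp
  ext n
  rw [sub_mul, one_mul, map_sub, coeff_C_mul, coeff_derivative_rising]
  cases n with
  | zero => simp
  | succ n =>
    rw [coeff_succ_X_mul, coeff_derivative]
    push_cast
    ring

theorem derivative_rescale {R : Type*} [CommSemiring R] (a : R) (f : R⟦X⟧) :
    d⁄dX R (rescale a f) = C a * rescale a (d⁄dX R f) := by
  ext n
  rw [coeff_derivative, coeff_C_mul, coeff_rescale, coeff_rescale, coeff_derivative]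
  ring

/-- The generating series `exp (ρ X) (1 - X)⁻ᶿ` of the sequence `n ↦ erlF ρ θ n`. -/
noncomputable def erlSeries (ρ θ : K) : K⟦X⟧ :=
  rescale ρ (exp K) * risingSeries θ

theorem one_sub_X_mul_derivative_erlSeries (ρ θ : K) :
    (1 - X) * d⁄dX K (erlSeries ρ θ) = (C ρ * (1 - X) + C θ) * erlSeries ρ θ := by
  rw [erlSeries, Derivation.leibniz, derivative_rescale, derivative_exp, smul_eq_mul, smul_eq_mul]
  linear_combination rescale ρ (exp K) * one_sub_X_mul_derivative_risingSeries θ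

theorem coeff_one_erlSeries (ρ θ : K) :
    coeff 1 (erlSeries ρ θ) = (ρ + θ) * coeff 0 (erlSeries ρ θ) := by
  have h := congrArg (coeff 0) (one_sub_X_mul_derivative_erlSeries ρ θ)
  rw [sub_mul, one_mul, map_sub, coeff_zero_X_mul, coeff_derivative] at h
  simpa using h

theorem coeff_erlSeries_add_two (ρ θ : K) (n : ℕ) :
    (n + 2) * coeff (n + 2) (erlSeries ρ θ) + ρ * coeff n (erlSeries ρ θ) =
      (ρ + (n + 1) + θ) * coeff (n + 1) (erlSeries ρ θ) := by
  have h := congrArg (coeff (n + 1)) (one_sub_X_mul_derivative_erlSeries ρ θ)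
  simp only [add_mul, sub_mul, mul_assoc, one_mul, map_add, map_sub, coeff_C_mul,
    coeff_succ_X_mul, coeff_derivative] at h
  push_cast at h
  linear_combination h

theorem coeff_erlSeries (ρ θ : ℝ) (n : ℕ) : coeff n (erlSeries ρ θ) = erlF ρ θ n := by
  rw [erlSeries, mul_comm, coeff_mul, Nat.sum_antidiagonal_eq_sum_range_succ_mk, erlF]
  refine sum_congr rfl fun ℓ _ ↦ ?_
  simp only [risingSeries, coeff_mk, coeff_rescale, coeff_exp, map_div₀, map_one, map_natCast]
  ring

end GeneratingSeries

/-- `n! ρ⁻ⁿ Fₙ(θ)`, the solution of the recurrence with death rate `n` that takes the value `1`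
at `0`. -/
noncomputable def erlSol (ρ θ : ℝ) (n : ℕ) : ℝ :=
  n ! / ρ ^ n * erlF ρ θ n

theorem erlSol_recurrence {ρ : ℝ} (hρ : ρ ≠ 0) (θ : ℝ) (n : ℕ) :
    (ρ + n + θ) * erlSol ρ θ n = ρ * erlSol ρ θ (n + 1) + n * erlSol ρ θ (n - 1) := by
  cases n with
  | zero =>
    have h := coeff_one_erlSeries ρ θ
    simp only [coeff_erlSeries] at h
    simp only [erlSol, h, zero_add, Nat.factorial_zero, Nat.factorial_one, pow_zero, pow_one,
      Nat.cast_zero, Nat.cast_one]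
    field_simp
    ring
  | succ n =>
    have h := coeff_erlSeries_add_two ρ θ n
    simp only [coeff_erlSeries] at h
    simp only [erlSol, Nat.add_sub_cancel, Nat.factorial_succ, pow_succ]
    push_cast
    field_simp
    linear_combination -h

section TwoRoots

variable {R : Type*} [CommRing R]

/-- `z - w` times the sequence with characteristic roots `z`, `w` and initial values `p`, `q`; the
factor keeps the definition free of division. -/
def twoRootSeq (z w p q : R) (k : ℕ) : R :=
  p * (z * w ^ k - w * z ^ k) + q * (z ^ k - w ^ k)

theorem twoRootSeq_zero (z w p q : R) : twoRootSeq z w p q 0 = p * (z - w) := by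
  simp [twoRootSeq]

theorem twoRootSeq_one (z w p q : R) : twoRootSeq z w p q 1 = q * (z - w) := by
  rw [twoRootSeq]
  ring

theorem twoRootSeq_self (z p q : R) (k : ℕ) : twoRootSeq z z p q k = 0 := by
  simp [twoRootSeq]

theorem twoRootSeq_recurrence {a b c z w : R} (hz : a * (z * z) + b * z + c = 0)
    (hw : a * (w * w) + b * w + c = 0) (p q : R) (k : ℕ) :
    a * twoRootSeq z w p q (k + 2) + b * twoRootSeq z w p q (k + 1) +
      c * twoRootSeq z w p q k = 0 := by
  simp only [twoRootSeq]
  linear_combination (q - p * w) * z ^ k * hz + (p * z - q) * w ^ k * hw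

/-- `z - w` times the sequence that equals `u` up to `m + 1` and from `m` on has characteristic
roots `z`, `w`. -/
def rootExtension (u : ℕ → R) (z w : R) (m n : ℕ) : R :=
  if n ≤ m then (z - w) * u n else twoRootSeq z w (u m) (u (m + 1)) (n - m)

theorem rootExtension_of_le_succ (u : ℕ → R) (z w : R) {m n : ℕ} (hn : n ≤ m + 1) :
    rootExtension u z w m n = (z - w) * u n := by
  rcases hn.lt_or_eq with hn | rfl
  · rw [rootExtension, if_pos (Nat.le_of_lt_succ hn)]
  · rw [rootExtension, if_neg m.lt_succ_self.not_ge, Nat.add_sub_cancel_left, twoRootSeq_one,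
      mul_comm]

theorem rootExtension_of_ge (u : ℕ → R) (z w : R) {m n : ℕ} (hn : m ≤ n) :
    rootExtension u z w m n = twoRootSeq z w (u m) (u (m + 1)) (n - m) := by
  rcases hn.eq_or_lt with rfl | hn
  · rw [rootExtension, if_pos le_rfl, Nat.sub_self, twoRootSeq_zero, mul_comm]
  · rw [rootExtension, if_neg hn.not_ge]

theorem rootExtension_recurrence {a z w : R} {b c u : ℕ → R} {m : ℕ}
    (hu : ∀ n ≤ m, a * u (n + 1) + b n * u n + c n * u (n - 1) = 0)
    (hz : a * (z * z) + b m * z + c m = 0) (hw : a * (w * w) + b m * w + c m = 0) (n : ℕ) :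
    a * rootExtension u z w m (n + 1) + b (min n m) * rootExtension u z w m n +
      c (min n m) * rootExtension u z w m (n - 1) = 0 := by
  rcases le_or_gt n m with hn | hn
  · rw [min_eq_left hn, rootExtension_of_le_succ u z w (by lia),
      rootExtension_of_le_succ u z w (by lia), rootExtension_of_le_succ u z w (by lia)]
    linear_combination (z - w) * hu n hn
  · obtain ⟨k, rfl⟩ : ∃ k, n = m + k + 1 := Nat.exists_eq_add_of_lt hn
    rw [min_eq_right hn.le, rootExtension_of_ge u z w (by lia),
      rootExtension_of_ge u z w (by lia), rootExtension_of_ge u z w (by lia),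
      show m + k + 1 + 1 - m = k + 2 by lia, show m + k + 1 - m = k + 1 by lia,
      show m + k + 1 - 1 - m = k by lia]
    exact twoRootSeq_recurrence hz hw _ _ k

end TwoRoots

theorem rootExtension_erlSol_of_le {ρ : ℝ} (hρ : ρ ≠ 0) (θ z w : ℝ) {m n : ℕ} (hn : n ≤ m) :
    ρ ^ (m + 1) / m ! * rootExtension (erlSol ρ θ) z w m n =
      ρ ^ (m - n) * (n ! / m !) * (ρ * (z - w)) * erlF ρ θ n := by
  rw [rootExtension_of_le_succ _ _ _ (Nat.le_succ_of_le hn), erlSol, pow_sub₀ ρ hρ hn]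
  ring

theorem rootExtension_erlSol_of_ge {ρ : ℝ} (hρ : ρ ≠ 0) (θ z w : ℝ) {m n : ℕ} (hn : m ≤ n) :
    ρ ^ (m + 1) / m ! * rootExtension (erlSol ρ θ) z w m n =
      twoRootSeq z w (ρ * erlF ρ θ m) ((m + 1) * erlF ρ θ (m + 1)) (n - m) := by
  rw [rootExtension_of_ge _ _ _ hn]
  simp only [twoRootSeq, erlSol, Nat.factorial_succ, pow_succ]
  push_cast
  field_simp

theorem rootExtension_erlSol_recurrence {ρ θ z w : ℝ} {m : ℕ} (hρ : ρ ≠ 0)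
    (hz : ρ * (z * z) + -(ρ + θ + m) * z + m = 0) (hw : ρ * (w * w) + -(ρ + θ + m) * w + m = 0)
    (n : ℕ) :
    (ρ + (min n m : ℕ) + θ) * rootExtension (erlSol ρ θ) z w m n =
      ρ * rootExtension (erlSol ρ θ) z w m (n + 1) +
        (min n m : ℕ) * rootExtension (erlSol ρ θ) z w m (n - 1) := by
  have h := rootExtension_recurrence (u := erlSol ρ θ) (b := fun n ↦ -(ρ + θ + n))
    (c := fun n ↦ (n : ℝ)) (fun n _ ↦ by linear_combination -erlSol_recurrence hρ θ n) hz hw n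
  linear_combination -h

end MMmFirstPassage

open MMmFirstPassage in
theorem mmm_first_passage_transform_solves_system_general (ρ θ : ℝ) (hρ : ρ ≠ 0)
    (m nst : ℕ) (hmn : m ≤ nst)
    (Δ Zp Zm D : ℝ)
    (hΔ : Δ = ((m : ℝ) + ρ + θ) ^ 2 - 4 * m * ρ)
    (hZp : Zp = (ρ + θ + m + Real.sqrt Δ) / (2 * ρ))
    (hZm : Zm = (ρ + θ + m - Real.sqrt Δ) / (2 * ρ))
    (hD : D = ρ * erlF ρ θ m * (Zp * Zm ^ (nst - m) - Zm * Zp ^ (nst - m))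
      + ((m : ℝ) + 1) * erlF ρ θ (m + 1) * (Zp ^ (nst - m) - Zm ^ (nst - m)))
    (hD0 : D ≠ 0)
    (f1 f2 Q : ℕ → ℝ)
    (hf1 : ∀ n : ℕ, f1 n = ρ ^ (m - n) * ((n.factorial : ℝ) / m.factorial) *
      Real.sqrt Δ * erlF ρ θ n / D)
    (hf2 : ∀ n : ℕ, f2 n = (ρ * erlF ρ θ m * (Zp * Zm ^ (n - m) - Zm * Zp ^ (n - m))
      + ((m : ℝ) + 1) * erlF ρ θ (m + 1) * (Zp ^ (n - m) - Zm ^ (n - m))) / D)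
    (hQ : ∀ n : ℕ, Q n = if n ≤ m then f1 n else f2 n) :
    0 < Δ ∧ f1 m = f2 m ∧ Q nst = 1 ∧
      ∀ n : ℕ, (ρ + (min n m : ℕ) + θ) * Q n =
        ρ * Q (n + 1) + ((min n m : ℕ) : ℝ) * Q (n - 1) := by
  -- `D` vanishes when the two roots coincide, and `√Δ = 0` also when `Δ < 0`.
  have hsqrt : √Δ ≠ 0 := fun h ↦ hD0 <| by
    have hroots : Zp = Zm := by rw [hZp, hZm, h, add_zero, sub_zero]
    rw [hD, hroots]
    exact twoRootSeq_self ..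
  have hΔ0 : 0 < Δ := Real.sqrt_pos.1 (Δ.sqrt_nonneg.lt_of_ne' hsqrt)
  have hdiscrim : discrim ρ (-(ρ + θ + m)) m = √Δ * √Δ := by
    rw [Real.mul_self_sqrt hΔ0.le, hΔ, discrim]
    ring
  have hp : ρ * (Zp * Zp) + -(ρ + θ + m) * Zp + m = 0 :=
    (quadratic_eq_zero_iff hρ hdiscrim Zp).2 (.inl (by rw [hZp, neg_neg]))
  have hm : ρ * (Zm * Zm) + -(ρ + θ + m) * Zm + m = 0 :=
    (quadratic_eq_zero_iff hρ hdiscrim Zm).2 (.inr (by rw [hZm, neg_neg]))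
  have hgap : √Δ = ρ * (Zp - Zm) := by
    rw [hZp, hZm]
    field_simp
    ring
  let E := rootExtension (erlSol ρ θ) Zp Zm m
  let κ := ρ ^ (m + 1) / m.factorial / D
  have hf1E (n : ℕ) (hn : n ≤ m) : f1 n = κ * E n := by
    rw [hf1, hgap, ← rootExtension_erlSol_of_le hρ θ Zp Zm hn, mul_div_right_comm]
  have hf2E (n : ℕ) (hn : m ≤ n) : f2 n = κ * E n := by
    rw [hf2, ← twoRootSeq, ← rootExtension_erlSol_of_ge hρ θ Zp Zm hn, mul_div_right_comm]
  have hQE (n : ℕ) : Q n = κ * E n := by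
    rw [hQ]
    split_ifs with hn
    exacts [hf1E n hn, hf2E n (by lia)]
  refine ⟨hΔ0, (hf1E m le_rfl).trans (hf2E m le_rfl).symm, ?_, fun n ↦ ?_⟩
  · rw [hQE, ← hf2E nst hmn, hf2, ← hD, div_self hD0]
  · rw [hQE, hQE, hQE]
    linear_combination κ * rootExtension_erlSol_recurrence hρ hp hm n

/-- the explicit family Q̂_n solves the Laplace-transformed backward
Kolmogorov system for the first passage time to level n* of the M/M/m queue;
moreover Δ > 0 and the two defining formulas agree at n = m. -/
theorem mmm_first_passage_transform_solves_system (ρ θ : ℝ) (hρ : 0 < ρ) (hθ : 0 < θ)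
    (m nst : ℕ) (hm : 1 ≤ m) (hmn : m < nst)
    (Δ Zp Zm D : ℝ)
    (hΔ : Δ = ((m : ℝ) + ρ + θ) ^ 2 - 4 * m * ρ)
    (hZp : Zp = (ρ + θ + m + Real.sqrt Δ) / (2 * ρ))
    (hZm : Zm = (ρ + θ + m - Real.sqrt Δ) / (2 * ρ))
    (hD : D = ρ * erlF ρ θ m * (Zp * Zm ^ (nst - m) - Zm * Zp ^ (nst - m))
      + ((m : ℝ) + 1) * erlF ρ θ (m + 1) * (Zp ^ (nst - m) - Zm ^ (nst - m)))
    (hD0 : D ≠ 0)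
    (f1 f2 Q : ℕ → ℝ)
    (hf1 : ∀ n : ℕ, f1 n = ρ ^ (m - n) * ((n.factorial : ℝ) / m.factorial) *
      Real.sqrt Δ * erlF ρ θ n / D)
    (hf2 : ∀ n : ℕ, f2 n = (ρ * erlF ρ θ m * (Zp * Zm ^ (n - m) - Zm * Zp ^ (n - m))
      + ((m : ℝ) + 1) * erlF ρ θ (m + 1) * (Zp ^ (n - m) - Zm ^ (n - m))) / D)
    (hQ : ∀ n : ℕ, Q n = if n ≤ m then f1 n else f2 n) :
    0 < Δ
    ∧ f1 m = f2 m
    ∧ Q nst = 1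
    ∧ ρ * Q 1 = (ρ + θ) * Q 0
    ∧ (∀ n : ℕ, 1 ≤ n → n ≤ m →
        (ρ + n + θ) * Q n = ρ * Q (n + 1) + (n : ℝ) * Q (n - 1))
    ∧ ∀ n : ℕ, m ≤ n → n ≤ nst - 1 →
        (ρ + m + θ) * Q n = ρ * Q (n + 1) + (m : ℝ) * Q (n - 1) := by
  obtain ⟨hΔ0, hagree, hQnst, hrec⟩ := mmm_first_passage_transform_solves_system_general ρ θ hρ.ne'
    m nst hmn.le Δ Zp Zm D hΔ hZp hZm hD hD0 f1 f2 Q hf1 hf2 hQ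
  exact ⟨hΔ0, hagree, hQnst, by simpa using (hrec 0).symm,
    fun n _ hn ↦ by simpa only [min_eq_left hn] using hrec n,
    fun n hn _ ↦ by simpa only [min_eq_right hn] using hrec n⟩
end

section
/- Fix reals ρ > 0 and η > 0 and natural numbers 1 ≤ m < n*. Define q_n for 0 ≤ n ≤ n* by: q_n = (1/ρ) Σ_{J=n}^{n*−1} Σ_{ℓ=m+1}^{J} (ρ/η)^{ℓ−J} Γ(J−m+1+m/η)/Γ(ℓ−m+1+m/η) + (1/ρ)(ρ/η)^m [1/Γ(1+m/η)] [Σ_{ℓ=0}^{m} (m!/ℓ!) ρ^{ℓ−m}] [Σ_{J=n}^{n*−1} (η/ρ)^J Γ(J−m+1+m/η)] for m ≤ n ≤ n* (so q_{n*} = 0), and q_n = q_m + Σ_{j=n}^{m−1} j! ρ^{−j} Σ_{ℓ=0}^{j} ρ^{ℓ−1}/ℓ! for 0 ≤ n ≤ m. Then ρ(q_{n+1} − q_n) + n(q_{n−1} − q_n) = −1 for 0 ≤ n ≤ m, and ρ(q_{n+1} − q_n) + [m + (n−m)η](q_{n−1} − q_n) = −1 for m ≤ n ≤ n*−1 (with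 the n = 0 equation reading ρ(q_1 − q_0) = −1). -/
open Finset

/-!
Let `d n` be the mean time a birth–death process needs to climb from `n` to `n + 1`. A first-step
analysis gives `β n * d n = 1 + δ n * d (n - 1)`, and the mean passage time from `n` to `N` is
`∑ J ∈ Ico n N, d J`, which therefore satisfies the recurrences of the theorem. The explicit
formulas come from solving the recurrence for `d` by variation of constants: the homogeneous
equation `β (n + 1) * w (n + 1) = δ (n + 1) * w n` is solved by `n! / ρ ^ n` below level `m`, and
by `(η / ρ) ^ n * Γ (n - m + 1 + m / η)` above it.
-/

section BirthDeath

variable {K : Type*} [Field K] {β δ : ℕ → K}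

/-- The mean time that a birth–death process with birth rates `β` and death rates `δ` takes to
pass from `n` to `n + 1`, encoded by its first-step recurrence. The value of `δ 0` is ignored. -/
def meanUpcrossingTime (β δ : ℕ → K) : ℕ → K
  | 0 => 1 / β 0
  | n + 1 => (1 + δ (n + 1) * meanUpcrossingTime β δ n) / β (n + 1)

/-- The mean first passage time of a birth–death process from `n` to `N`, as the sum of the mean
upcrossing times of the levels in between. It is `0` for `N ≤ n`. -/
def meanPassageTime (β δ : ℕ → K) (N n : ℕ) : K :=
  ∑ J ∈ Ico n N, meanUpcrossingTime β δ J

theorem meanPassageTime_self (β δ : ℕ → K) (N : ℕ) : meanPassageTime β δ N N = 0 := by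
  simp [meanPassageTime]

theorem meanPassageTime_eq_add_succ {n N : ℕ} (hn : n < N) :
    meanPassageTime β δ N n = meanUpcrossingTime β δ n + meanPassageTime β δ N (n + 1) :=
  sum_eq_sum_Ico_succ_bot hn _

theorem meanPassageTime_recurrence {n N : ℕ} (hn : n < N) (hβ : β n ≠ 0) :
    β n * (meanPassageTime β δ N (n + 1) - meanPassageTime β δ N n)
      + δ n * (meanPassageTime β δ N (n - 1) - meanPassageTime β δ N n) = -1 := by
  cases n with
  | zero =>
    -- `0 - 1 = 0` in `ℕ`, so the death term vanishes
    rw [meanPassageTime_eq_add_succ hn, meanUpcrossingTime]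
    field_simp
    ring
  | succ n =>
    rw [Nat.add_sub_cancel, meanPassageTime_eq_add_succ (n.lt_succ_self.trans hn),
      meanPassageTime_eq_add_succ hn, meanUpcrossingTime]
    field_simp
    ring

theorem meanUpcrossingTime_eq_of_homogeneous {w : ℕ → K} {m n : ℕ} (hmn : m ≤ n)
    (hβ : ∀ k ∈ Ioc m n, β k ≠ 0) (hw : ∀ k ∈ Icc m n, w k ≠ 0)
    (hwδ : ∀ k ∈ Ico m n, β (k + 1) * w (k + 1) = δ (k + 1) * w k) :
    meanUpcrossingTime β δ n =
      ∑ ℓ ∈ Icc (m + 1) n, w n / w ℓ / β ℓ + w n / w m * meanUpcrossingTime β δ m := by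
  induction n, hmn using Nat.le_induction with
  | base => simp [hw m (by simp)]
  | succ n hmn ih =>
    simp only [mem_Ioc, mem_Icc, mem_Ico] at hβ hw hwδ ih
    have hβn := hβ (n + 1) (by lia)
    have hwn := hw (n + 1) (by lia)
    have hratio : w (n + 1) = δ (n + 1) / β (n + 1) * w n := by
      rw [div_mul_eq_mul_div, eq_div_iff hβn, mul_comm, hwδ n (by lia)]
    have hsum : ∑ ℓ ∈ Icc (m + 1) n, w (n + 1) / w ℓ / β ℓ
        = δ (n + 1) / β (n + 1) * ∑ ℓ ∈ Icc (m + 1) n, w n / w ℓ / β ℓ := by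
      rw [mul_sum, hratio]
      exact sum_congr rfl fun ℓ _ ↦ by ring
    rw [meanUpcrossingTime, ih (fun k hk ↦ hβ k (by lia)) (fun k hk ↦ hw k (by lia))
      (fun k hk ↦ hwδ k (by lia)), sum_Icc_succ_top (by lia), div_self hwn, hsum, hratio]
    ring

theorem meanUpcrossingTime_of_linear_death [CharZero K] {ρ : K} (hρ : ρ ≠ 0) {n : ℕ}
    (hδ : ∀ k ≤ n, δ k = k) :
    meanUpcrossingTime (fun _ ↦ ρ) δ n =
      (n.factorial : K) * ρ ^ (-(n : ℤ)) *
        ∑ ℓ ∈ range (n + 1), ρ ^ ((ℓ : ℤ) - 1) / ℓ.factorial := by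
  have hfact (k : ℕ) : (k.factorial : K) ≠ 0 := Nat.cast_ne_zero.2 k.factorial_ne_zero
  rw [meanUpcrossingTime_eq_of_homogeneous (w := fun k ↦ (k.factorial : K) / ρ ^ k) n.zero_le
    (fun _ _ ↦ hρ) (fun k _ ↦ div_ne_zero (hfact k) (pow_ne_zero k hρ)), range_eq_Ico,
    sum_eq_sum_Ico_succ_bot n.add_one_pos, Ico_add_one_right_eq_Icc, mul_add, mul_sum, add_comm]
  · congr 1
    · simp [meanUpcrossingTime, div_eq_mul_inv]
    · refine sum_congr rfl fun ℓ _ ↦ ?_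
      rw [zpow_neg, zpow_sub₀ hρ, zpow_natCast, zpow_natCast, zpow_one]
      field_simp
  · intro k hk
    rw [hδ (k + 1) (mem_Ico.1 hk).2, Nat.factorial_succ, Nat.cast_mul]
    field_simp
    ring

end BirthDeath

section ErlangA

/-- The death rate of the Erlang A queue at level `n`: each of the at most `m` busy servers works
at rate `1`, and each of the `n - m` waiting customers abandons at rate `η`. -/
def erlangADeathRate {K : Type*} [Field K] (m : ℕ) (η : K) (n : ℕ) : K :=
  if n ≤ m then n else m + (n - m) * η

theorem erlangADeathRate_of_le {K : Type*} [Field K] {m n : ℕ} {η : K} (h : n ≤ m) :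
    erlangADeathRate m η n = n :=
  if_pos h

theorem erlangADeathRate_of_ge {K : Type*} [Field K] {m n : ℕ} {η : K} (h : m ≤ n) :
    erlangADeathRate m η n = m + (n - m) * η := by
  rcases h.eq_or_lt with rfl | h
  · simp [erlangADeathRate]
  · exact if_neg h.not_ge

/-- A solution of the homogeneous equation `ρ * w (n + 1) = δ (n + 1) * w n` at the levels
`n ≥ m` of the Erlang A queue, where `δ` is the death rate. -/
noncomputable def erlangAWeight (ρ η : ℝ) (m n : ℕ) : ℝ :=
  (η / ρ) ^ n * Real.Gamma ((n : ℝ) - m + 1 + m / η)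

variable {ρ η : ℝ} {m n : ℕ}

theorem sub_add_one_add_div_ne_neg_natCast (hpole : ∀ k : ℕ, (m : ℝ) / η ≠ -(k + 1))
    (hn : m ≤ n) (k : ℕ) : (n : ℝ) - m + 1 + m / η ≠ -k := by
  intro h
  apply hpole (n - m + k)
  push_cast [hn]
  linarith

theorem erlangAWeight_ne_zero (hρ : ρ ≠ 0) (hη : η ≠ 0)
    (hpole : ∀ k : ℕ, (m : ℝ) / η ≠ -(k + 1)) (hn : m ≤ n) : erlangAWeight ρ η m n ≠ 0 :=
  mul_ne_zero (pow_ne_zero n (div_ne_zero hη hρ))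
    (Real.Gamma_ne_zero (sub_add_one_add_div_ne_neg_natCast hpole hn))

theorem mul_erlangAWeight_succ (hρ : ρ ≠ 0) (hη : η ≠ 0)
    (hpole : ∀ k : ℕ, (m : ℝ) / η ≠ -(k + 1)) (hn : m ≤ n) :
    ρ * erlangAWeight ρ η m (n + 1)
      = erlangADeathRate m η (n + 1) * erlangAWeight ρ η m n := by
  have hne : (n : ℝ) - m + 1 + m / η ≠ 0 := by
    simpa using sub_add_one_add_div_ne_neg_natCast hpole hn 0
  have hΓ : Real.Gamma ((n + 1 : ℕ) - m + 1 + m / η)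
      = ((n : ℝ) - m + 1 + m / η) * Real.Gamma ((n : ℝ) - m + 1 + m / η) := by
    rw [← Real.Gamma_add_one hne]
    push_cast
    ring_nf
  rw [erlangADeathRate_of_ge (hn.trans n.le_succ), erlangAWeight, erlangAWeight, hΓ, pow_succ]
  push_cast
  field_simp
  ring

theorem erlangAWeight_div (hρ : ρ ≠ 0) (hη : η ≠ 0) (ℓ J : ℕ) :
    erlangAWeight ρ η m J / erlangAWeight ρ η m ℓ =
      (ρ / η) ^ ((ℓ : ℤ) - (J : ℤ)) *
        Real.Gamma ((J : ℝ) - m + 1 + m / η) / Real.Gamma ((ℓ : ℝ) - m + 1 + m / η) := by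
  rw [erlangAWeight, erlangAWeight, mul_div_mul_comm, zpow_sub₀ (div_ne_zero hρ hη),
    zpow_natCast, zpow_natCast, ← inv_div ρ η, inv_pow, inv_pow, inv_div_inv, mul_div_assoc]

theorem erlangAWeight_div_self_level (ρ η : ℝ) (m n : ℕ) :
    erlangAWeight ρ η m n / erlangAWeight ρ η m m =
      (ρ / η) ^ m * (1 / Real.Gamma (1 + m / η)) *
        ((η / ρ) ^ n * Real.Gamma ((n : ℝ) - m + 1 + m / η)) := by
  rw [erlangAWeight, erlangAWeight, sub_self, zero_add, ← inv_div η ρ, inv_pow]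
  ring

theorem meanUpcrossingTime_erlangA_of_le (hρ : ρ ≠ 0) (hn : n ≤ m) :
    meanUpcrossingTime (fun _ ↦ ρ) (erlangADeathRate m η) n =
      (n.factorial : ℝ) * ρ ^ (-(n : ℤ)) *
        ∑ ℓ ∈ range (n + 1), ρ ^ ((ℓ : ℤ) - 1) / ℓ.factorial :=
  meanUpcrossingTime_of_linear_death hρ fun _ hk ↦ erlangADeathRate_of_le (hk.trans hn)

theorem meanUpcrossingTime_erlangA_self (hρ : ρ ≠ 0) :
    meanUpcrossingTime (fun _ ↦ ρ) (erlangADeathRate m η) m =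
      (1 / ρ) * ∑ ℓ ∈ range (m + 1),
        (m.factorial : ℝ) / ℓ.factorial * ρ ^ ((ℓ : ℤ) - (m : ℤ)) := by
  rw [meanUpcrossingTime_erlangA_of_le hρ le_rfl, mul_sum, mul_sum]
  refine sum_congr rfl fun ℓ _ ↦ ?_
  rw [zpow_sub₀ hρ, zpow_sub₀ hρ, zpow_neg, zpow_one]
  ring

theorem meanUpcrossingTime_erlangA_of_ge (hρ : ρ ≠ 0) (hη : η ≠ 0)
    (hpole : ∀ k : ℕ, (m : ℝ) / η ≠ -(k + 1)) (hn : m ≤ n) :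
    meanUpcrossingTime (fun _ ↦ ρ) (erlangADeathRate m η) n =
      (1 / ρ) * ∑ ℓ ∈ Icc (m + 1) n, (ρ / η) ^ ((ℓ : ℤ) - (n : ℤ)) *
          Real.Gamma ((n : ℝ) - m + 1 + m / η) / Real.Gamma ((ℓ : ℝ) - m + 1 + m / η)
        + (1 / ρ) * (ρ / η) ^ m * (1 / Real.Gamma (1 + m / η)) *
            (∑ ℓ ∈ range (m + 1),
              (m.factorial : ℝ) / ℓ.factorial * ρ ^ ((ℓ : ℤ) - (m : ℤ))) *
            ((η / ρ) ^ n * Real.Gamma ((n : ℝ) - m + 1 + m / η)) := by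
  rw [meanUpcrossingTime_eq_of_homogeneous hn (fun _ _ ↦ hρ)
    (fun k hk ↦ erlangAWeight_ne_zero hρ hη hpole (mem_Icc.1 hk).1)
    (fun k hk ↦ mul_erlangAWeight_succ hρ hη hpole (mem_Ico.1 hk).1),
    meanUpcrossingTime_erlangA_self hρ, erlangAWeight_div_self_level, ← sum_div]
  simp only [erlangAWeight_div hρ hη]
  ring

theorem meanPassageTime_erlangA_of_le (hρ : ρ ≠ 0) {N : ℕ} (hn : n ≤ m) (hN : m ≤ N) :
    meanPassageTime (fun _ ↦ ρ) (erlangADeathRate m η) N n =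
      meanPassageTime (fun _ ↦ ρ) (erlangADeathRate m η) N m + ∑ j ∈ Ico n m,
        (j.factorial : ℝ) * ρ ^ (-(j : ℤ)) *
          ∑ ℓ ∈ range (j + 1), ρ ^ ((ℓ : ℤ) - 1) / ℓ.factorial := by
  rw [meanPassageTime, meanPassageTime, ← sum_Ico_consecutive _ hn hN, add_comm]
  exact congrArg _ <| sum_congr rfl fun j hj ↦
    meanUpcrossingTime_erlangA_of_le hρ (mem_Ico.1 hj).2.le

theorem meanPassageTime_erlangA_of_ge (hρ : ρ ≠ 0) (hη : η ≠ 0)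
    (hpole : ∀ k : ℕ, (m : ℝ) / η ≠ -(k + 1)) (hn : m ≤ n) (N : ℕ) :
    meanPassageTime (fun _ ↦ ρ) (erlangADeathRate m η) N n =
      (1 / ρ) * ∑ J ∈ Ico n N, ∑ ℓ ∈ Icc (m + 1) J, (ρ / η) ^ ((ℓ : ℤ) - (J : ℤ)) *
          Real.Gamma ((J : ℝ) - m + 1 + m / η) / Real.Gamma ((ℓ : ℝ) - m + 1 + m / η)
        + (1 / ρ) * (ρ / η) ^ m * (1 / Real.Gamma (1 + m / η)) *
            (∑ ℓ ∈ range (m + 1),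
              (m.factorial : ℝ) / ℓ.factorial * ρ ^ ((ℓ : ℤ) - (m : ℤ))) *
            (∑ J ∈ Ico n N, (η / ρ) ^ J * Real.Gamma ((J : ℝ) - m + 1 + m / η)) := by
  rw [meanPassageTime, mul_sum, mul_sum, ← sum_add_distrib]
  exact sum_congr rfl fun J hJ ↦
    meanUpcrossingTime_erlangA_of_ge hρ hη hpole (hn.trans (mem_Ico.1 hJ).1)

end ErlangA

theorem erlangA_mean_first_passage_general (ρ η : ℝ) (hρ : ρ ≠ 0) (hη : η ≠ 0)
    (m nst : ℕ) (hpole : ∀ k : ℕ, (m : ℝ) / η ≠ -(k + 1)) (hmn : m < nst)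
    (qU q : ℕ → ℝ)
    (hqU : ∀ n : ℕ, qU n =
      (1 / ρ) * ∑ J ∈ Ico n nst, ∑ ℓ ∈ Icc (m + 1) J,
          (ρ / η) ^ ((ℓ : ℤ) - (J : ℤ)) *
            Real.Gamma ((J : ℝ) - m + 1 + m / η) / Real.Gamma ((ℓ : ℝ) - m + 1 + m / η)
        + (1 / ρ) * (ρ / η) ^ m * (1 / Real.Gamma (1 + m / η)) *
            (∑ ℓ ∈ range (m + 1),
              (m.factorial : ℝ) / ℓ.factorial * ρ ^ ((ℓ : ℤ) - (m : ℤ))) *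
            (∑ J ∈ Ico n nst,
              (η / ρ) ^ J * Real.Gamma ((J : ℝ) - m + 1 + m / η)))
    (hq : ∀ n : ℕ, q n = if m ≤ n then qU n
      else qU m + ∑ j ∈ Ico n m,
        (j.factorial : ℝ) * ρ ^ (-(j : ℤ)) *
          ∑ ℓ ∈ range (j + 1), ρ ^ ((ℓ : ℤ) - 1) / ℓ.factorial) :
    q nst = 0
    ∧ (∀ n : ℕ, n ≤ m →
        ρ * (q (n + 1) - q n) + (n : ℝ) * (q (n - 1) - q n) = -1)
    ∧ ∀ n : ℕ, m ≤ n → n < nst →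
        ρ * (q (n + 1) - q n) + ((m : ℝ) + ((n : ℝ) - m) * η) * (q (n - 1) - q n)
          = -1 := by
  have hqT (n : ℕ) : q n = meanPassageTime (fun _ ↦ ρ) (erlangADeathRate m η) nst n := by
    rw [hq, hqU, hqU]
    split_ifs with hn
    · exact (meanPassageTime_erlangA_of_ge hρ hη hpole hn nst).symm
    · rw [meanPassageTime_erlangA_of_le hρ (not_le.1 hn).le hmn.le,
        meanPassageTime_erlangA_of_ge hρ hη hpole le_rfl nst]
  simp only [hqT]
  refine ⟨meanPassageTime_self _ _ _, fun n hn ↦ ?_, fun n hn hnst ↦ ?_⟩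
  · rw [← erlangADeathRate_of_le (η := η) hn]
    exact meanPassageTime_recurrence (β := fun _ ↦ ρ) (hn.trans_lt hmn) hρ
  · rw [← erlangADeathRate_of_ge hn]
    exact meanPassageTime_recurrence (β := fun _ ↦ ρ) hnst hρ

/-- the explicit formulas for the conditional mean first passage time
q_n = E[τ(n*) | N(0)=n] of the Erlang A model satisfy the defining recurrences,
with q_{n*} = 0. -/
theorem erlangA_mean_first_passage (ρ η : ℝ) (hρ : 0 < ρ) (hη : 0 < η)
    (m nst : ℕ) (hm : 1 ≤ m) (hmn : m < nst)
    (qU q : ℕ → ℝ)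
    (hqU : ∀ n : ℕ, qU n =
      (1 / ρ) * ∑ J ∈ Finset.Ico n nst, ∑ ℓ ∈ Finset.Icc (m + 1) J,
          (ρ / η) ^ ((ℓ : ℤ) - (J : ℤ)) *
            Real.Gamma ((J : ℝ) - m + 1 + m / η) / Real.Gamma ((ℓ : ℝ) - m + 1 + m / η)
        + (1 / ρ) * (ρ / η) ^ m * (1 / Real.Gamma (1 + m / η)) *
            (∑ ℓ ∈ Finset.range (m + 1),
              (m.factorial : ℝ) / ℓ.factorial * ρ ^ ((ℓ : ℤ) - (m : ℤ))) *
            (∑ J ∈ Finset.Ico n nst,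
              (η / ρ) ^ J * Real.Gamma ((J : ℝ) - m + 1 + m / η)))
    (hq : ∀ n : ℕ, q n = if m ≤ n then qU n
      else qU m + ∑ j ∈ Finset.Ico n m,
        (j.factorial : ℝ) * ρ ^ (-(j : ℤ)) *
          ∑ ℓ ∈ Finset.range (j + 1), ρ ^ ((ℓ : ℤ) - 1) / ℓ.factorial) :
    q nst = 0
    ∧ (∀ n : ℕ, n ≤ m →
        ρ * (q (n + 1) - q n) + (n : ℝ) * (q (n - 1) - q n) = -1)
    ∧ ∀ n : ℕ, m ≤ n → n < nst →
        ρ * (q (n + 1) - q n) + ((m : ℝ) + ((n : ℝ) - m) * η) * (q (n - 1) - q n)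
          = -1 := by
  have hpole (k : ℕ) : (m : ℝ) / η ≠ -(k + 1) :=
    ((neg_neg_of_pos k.cast_add_one_pos).trans_le (by positivity)).ne'
  exact erlangA_mean_first_passage_general ρ η hρ.ne' hη.ne' m nst hpole hmn qU q hqU hq
end

section
/- Fix a real ρ > 0 and a natural number m ≥ 1, and define F′_n(0) = Σ_{ℓ=1}^{n} ρ^{n−ℓ}/((n−ℓ)! ℓ) for n ∈ ℕ. Then: (i) the function θ ↦ F_n(θ) = Σ_{ℓ=0}^{n} [ρ^{n−ℓ}/((n−ℓ)! ℓ!)] (θ)_ℓ is differentiable at θ = 0 with derivative F′_n(0); and (ii) m F′_m(0) − ρ F′_{m−1}(0) = Σ_{J=0}^{m−1} ρ^J/J!. -/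
open Finset

/-- F′_n(0) = Σ_{ℓ=1}^{n} ρ^{n−ℓ}/((n−ℓ)! ℓ). -/
noncomputable def erlFderiv0 (ρ : ℝ) (n : ℕ) : ℝ :=
  ∑ ℓ ∈ Finset.Icc 1 n, ρ ^ (n - ℓ) / ((n - ℓ).factorial * ℓ)

/-!
Since `(θ)_ℓ = θ (θ + 1)_{ℓ - 1}`, the derivative of `(θ)_ℓ` at `0` is `(1)_{ℓ - 1} = (ℓ - 1)!`,
which turns the coefficient `1 / ℓ!` into `1 / ℓ`. For the recurrence, put `a_J = ρ ^ J / J!` and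
substitute `ℓ = n - J`, so that `F'_n(0) = ∑_{J < n} a_J / (n - J)`. Because `ρ a_{J - 1} = J a_J`,
the `J`-th term of `m F'_m(0)` minus the `(J - 1)`-st term of `ρ F'_{m - 1}(0)` is
`(m - J) a_J / (m - J) = a_J`.
-/

section RisingFactorial

theorem eval_ascPochhammer_comp_X_add_one {S : Type*} [Semiring S] (n : ℕ) (x : S) :
    ((ascPochhammer S n).comp (Polynomial.X + 1)).eval x = (ascPochhammer S n).eval (x + 1) := by
  have eval_comp := ascPochhammer_eval_comp (R := ℕ) n (Polynomial.X + 1) x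
  rwa [Polynomial.map_add, Polynomial.map_X, Polynomial.map_one, Polynomial.eval₂_add,
    Polynomial.eval₂_X, Polynomial.eval₂_one] at eval_comp

theorem eval_zero_derivative_ascPochhammer_succ (S : Type*) [Semiring S] (n : ℕ) :
    (Polynomial.derivative (ascPochhammer S (n + 1))).eval 0 = n.factorial := by
  rw [ascPochhammer_succ_left, Polynomial.derivative_mul, Polynomial.derivative_X, one_mul,
    Polynomial.X_mul, Polynomial.eval_add, Polynomial.eval_mul_X, mul_zero, add_zero,
    eval_ascPochhammer_comp_X_add_one, zero_add, ascPochhammer_eval_one]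

theorem hasDerivAt_zero_sum_ascPochhammer {𝕜 : Type*} [NontriviallyNormedField 𝕜]
    (c : ℕ → 𝕜) (n : ℕ) :
    HasDerivAt (fun θ ↦ ∑ ℓ ∈ range (n + 1), c ℓ * (ascPochhammer 𝕜 ℓ).eval θ)
      (∑ ℓ ∈ Icc 1 n, c ℓ * (ℓ - 1).factorial) 0 := by
  have hasDerivAt_term (ℓ : ℕ) : HasDerivAt (fun θ ↦ c ℓ * (ascPochhammer 𝕜 ℓ).eval θ)
      (c ℓ * (Polynomial.derivative (ascPochhammer 𝕜 ℓ)).eval 0) 0 :=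
    ((ascPochhammer 𝕜 ℓ).hasDerivAt 0).const_mul (c ℓ)
  refine (HasDerivAt.fun_sum fun ℓ _ ↦ hasDerivAt_term ℓ).congr_deriv ?_
  have shift := sum_Ico_add' (fun ℓ ↦ c ℓ * ((ℓ - 1).factorial : 𝕜)) 0 n 1
  simp only [← range_eq_Ico, zero_add, Ico_add_one_right_eq_Icc, Nat.add_sub_cancel] at shift
  simp only [sum_range_succ', eval_zero_derivative_ascPochhammer_succ, ascPochhammer_zero,
    Polynomial.derivative_one, Polynomial.eval_zero, mul_zero, add_zero, shift]

end RisingFactorial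

section Recurrence

variable {K : Type*} [Field K]

theorem sum_Icc_pow_div_factorial_mul_eq_sum_range (ρ : K) (n : ℕ) :
    ∑ ℓ ∈ Icc 1 n, ρ ^ (n - ℓ) / ((n - ℓ).factorial * ℓ) =
      ∑ J ∈ range n, ρ ^ J / (J.factorial * (n - J)) := by
  refine sum_nbij' (n - ·) (n - ·) ?_ ?_ ?_ ?_ fun ℓ hℓ ↦ ?_
  iterate 4 (simp only [mem_Icc, mem_range]; omega)
  rw [Nat.cast_sub (mem_Icc.1 hℓ).2, sub_sub_cancel]

theorem succ_mul_sum_sub_mul_sum_eq_sum_pow_div_factorial [CharZero K] (ρ : K) (n : ℕ) :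
    ((n + 1 : ℕ) : K) * ∑ J ∈ range (n + 1), ρ ^ J / (J.factorial * ((n + 1 : ℕ) - J)) -
      ρ * ∑ J ∈ range n, ρ ^ J / (J.factorial * (n - J)) =
    ∑ J ∈ range (n + 1), ρ ^ J / J.factorial := by
  have term_recurrence (J : ℕ) (hJ : J ∈ range n) :
      ((n + 1 : ℕ) : K) * (ρ ^ (J + 1) / ((J + 1).factorial * ((n + 1 : ℕ) - (J + 1 : ℕ)))) -
        ρ * (ρ ^ J / (J.factorial * (n - J))) = ρ ^ (J + 1) / (J + 1).factorial := by
    have sub_ne : (n : K) - J ≠ 0 := sub_ne_zero.2 (mod_cast (mem_range.1 hJ).ne')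
    have factorial_ne : (J.factorial : K) ≠ 0 := mod_cast J.factorial_ne_zero
    have succ_ne : (J + 1 : K) ≠ 0 := mod_cast J.succ_ne_zero
    rw [Nat.factorial_succ]
    push_cast
    rw [add_sub_add_right_eq_sub]
    field_simp
    ring
  have succ_ne : (n + 1 : K) ≠ 0 := mod_cast n.succ_ne_zero
  rw [sum_range_succ', sum_range_succ', mul_add, mul_sum, mul_sum, add_sub_right_comm,
    ← sum_sub_distrib, sum_congr rfl term_recurrence]
  simp [succ_ne]

end Recurrence

theorem erlF_derivative_at_zero_general {𝕜 : Type*} [NontriviallyNormedField 𝕜] [CharZero 𝕜]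
    (ρ : 𝕜) (m : ℕ) (hm : 1 ≤ m) :
    (∀ n : ℕ, HasDerivAt
      (fun θ : 𝕜 ↦ ∑ ℓ ∈ range (n + 1),
        ρ ^ (n - ℓ) / ((n - ℓ).factorial * ℓ.factorial) * (ascPochhammer 𝕜 ℓ).eval θ)
      (∑ ℓ ∈ Icc 1 n, ρ ^ (n - ℓ) / ((n - ℓ).factorial * ℓ)) 0)
    ∧ (m : 𝕜) * ∑ ℓ ∈ Icc 1 m, ρ ^ (m - ℓ) / ((m - ℓ).factorial * ℓ)
        - ρ * ∑ ℓ ∈ Icc 1 (m - 1), ρ ^ (m - 1 - ℓ) / ((m - 1 - ℓ).factorial * ℓ)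
      = ∑ J ∈ range m, ρ ^ J / J.factorial := by
  refine ⟨fun n ↦ (hasDerivAt_zero_sum_ascPochhammer _ n).congr_deriv ?_, ?_⟩
  · refine sum_congr rfl fun ℓ hℓ ↦ ?_
    rw [← Nat.mul_factorial_pred (Nat.one_le_iff_ne_zero.1 (mem_Icc.1 hℓ).1), Nat.cast_mul]
    have pred_factorial_ne : ((ℓ - 1).factorial : 𝕜) ≠ 0 := mod_cast (ℓ - 1).factorial_ne_zero
    field_simp
  · obtain ⟨n, rfl⟩ := Nat.exists_eq_add_of_le' hm
    simp only [sum_Icc_pow_div_factorial_mul_eq_sum_range, Nat.add_sub_cancel]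
    exact succ_mul_sum_sub_mul_sum_eq_sum_pow_div_factorial ρ n

/-- (i) θ ↦ F_n(θ) is differentiable at θ = 0 with derivative F′_n(0);
(ii) m F′_m(0) − ρ F′_{m−1}(0) = Σ_{J=0}^{m−1} ρ^J/J!. -/
theorem erlF_derivative_at_zero (ρ : ℝ) (hρ : 0 < ρ) (m : ℕ) (hm : 1 ≤ m) :
    (∀ n : ℕ, HasDerivAt (fun θ : ℝ => erlF ρ θ n) (erlFderiv0 ρ n) 0)
    ∧ (m : ℝ) * erlFderiv0 ρ m - ρ * erlFderiv0 ρ (m - 1)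
      = ∑ J ∈ Finset.range m, ρ ^ J / J.factorial :=
  erlF_derivative_at_zero_general ρ m hm
end

section
/- Fix reals ρ > 0 and η > 0 and natural numbers m ≥ 1 and m ≤ n < n*, and set ν = m/η. For integers p ≥ m define h(p) = (ρ/η)^{p−m+ν}/Γ(p−m+1+ν), where Γ is the real Gamma function. Then all the series below converge and (1/ρ) Σ_{J=n}^{n*−1} (1/h(J)) Σ_{p=J+1}^{∞} h(p) − (1/η) Σ_{k=n}^{n*−1} 1/(k−m+1+ν) + (1/η) Σ_{J=1}^{∞} (1/J) [h(n*+J)/h(n*) − h(n+J)/h(n)] = 0. -/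
open Finset

/-- h(p) = H_p(0) = (ρ/η)^{p−m+ν}/Γ(p−m+1+ν) with ν = m/η, the value at θ = 0 of the
contour-integral solution H_p(θ;m) of the Erlang A difference equations. -/
noncomputable def erlH0 (ρ η : ℝ) (m : ℕ) (p : ℕ) : ℝ :=
  (ρ / η) ^ ((p : ℝ) - m + m / η) / Real.Gamma ((p : ℝ) - m + 1 + m / η)

/-!
By the functional equation of `Γ`, `h (p + j) / h p = x ^ j / (z)_j` with `x = ρ / η` and
`z = p - m + 1 + ν`, where `(z)_j` is the rising factorial; these are the terms of Kummer's series
`M(1, z, x)`. Passing from `z` to `z + 1` changes them by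
`x * (x ^ j / (z + 1)_j - x ^ j / (z)_j) = -j * (x ^ (j + 1) / (z)_{j + 1})`,
and the factor `j` cancels the weight `1 / j` of the logarithmic sum. Hence `x` times the increment
of the logarithmic sum is the first term `x / z` minus the tail `∑_{j ≥ 1} x ^ j / (z)_j`, and
adding these increments over `z` telescopes.
-/

section KummerTerm

variable {𝕜 : Type*} [Field 𝕜] (x c : 𝕜) (j : ℕ)

/-- The `j`-th term `x ^ j / (c)_j` of Kummer's confluent hypergeometric series `M(1, c, x)`, where
`(c)_j = c (c + 1) ⋯ (c + j - 1)`. Where `(c)_j = 0` the term has the junk value `0`. -/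
noncomputable def kummerTerm : 𝕜 :=
  x ^ j / (ascPochhammer 𝕜 j).eval c

lemma kummerTerm_zero : kummerTerm x c 0 = 1 := by
  simp [kummerTerm]

lemma kummerTerm_succ : kummerTerm x c (j + 1) = x / (c + j) * kummerTerm x c j := by
  rw [kummerTerm, kummerTerm, ascPochhammer_succ_eval, pow_succ', mul_comm (Polynomial.eval c _),
    mul_div_mul_comm]

lemma kummerTerm_succ_left : kummerTerm x c (j + 1) = x / c * kummerTerm x (c + 1) j := by
  rw [kummerTerm, kummerTerm, ascPochhammer_succ_left, pow_succ', Polynomial.eval_mul,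
    Polynomial.eval_X, Polynomial.eval_comp, Polynomial.eval_add, Polynomial.eval_X,
    Polynomial.eval_one, mul_div_mul_comm]

variable {c j} in
lemma mul_kummerTerm_add_one_sub (hc : c ≠ 0) (hcj : c + j ≠ 0) :
    x * (kummerTerm x (c + 1) j - kummerTerm x c j) = -j * kummerTerm x c (j + 1) := by
  have shift_left : c * kummerTerm x c (j + 1) = x * kummerTerm x (c + 1) j := by
    rw [kummerTerm_succ_left, ← mul_assoc, mul_div_cancel₀ _ hc]
  have shift_right : (c + j) * kummerTerm x c (j + 1) = x * kummerTerm x c j := by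
    rw [kummerTerm_succ, ← mul_assoc, mul_div_cancel₀ _ hcj]
  linear_combination shift_right - shift_left

end KummerTerm

section KummerSums

variable {𝕜 : Type*} [RCLike 𝕜] (x c : 𝕜)

/-- The tail `∑_{j ≥ 1} x ^ j / (c)_j = M(1, c, x) - 1` of Kummer's series. -/
noncomputable def kummerTail : 𝕜 :=
  ∑' j : ℕ, kummerTerm x c (j + 1)

/-- The logarithmic sum `∑_{j ≥ 1} (1 / j) x ^ j / (c)_j = ∫₀ˣ (M(1, c, t) - 1) / t dt` attached to
Kummer's series. -/
noncomputable def kummerLogSum : 𝕜 :=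
  ∑' j : ℕ, 1 / ((j : 𝕜) + 1) * kummerTerm x c (j + 1)

lemma summable_kummerTerm : Summable (kummerTerm x c) := by
  have ratio_tendsto : Filter.Tendsto (fun j : ℕ => ‖x / (c + j)‖) Filter.atTop (nhds 0) := by
    have denom_tendsto : Filter.Tendsto (fun j : ℕ => c + (j : 𝕜)) Filter.atTop
        (Bornology.cobounded 𝕜) :=
      (tendsto_const_add_cobounded c).comp tendsto_natCast_atTop_cobounded
    simpa [div_eq_mul_inv] using
      ((Filter.tendsto_inv₀_cobounded.comp denom_tendsto).const_mul x).norm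
  refine summable_of_ratio_norm_eventually_le one_half_lt_one ?_
  filter_upwards [ratio_tendsto.eventually_le_const one_half_pos] with j hj
  rw [kummerTerm_succ, norm_mul]
  gcongr

lemma summable_kummerTerm_succ : Summable fun j : ℕ => kummerTerm x c (j + 1) :=
  (summable_nat_add_iff 1).2 (summable_kummerTerm x c)

lemma summable_kummerLogSum :
    Summable fun j : ℕ => 1 / ((j : 𝕜) + 1) * kummerTerm x c (j + 1) := by
  refine (summable_kummerTerm_succ x c).norm.of_norm_bounded fun j => ?_
  have weight_le_one : ‖1 / ((j : 𝕜) + 1)‖ ≤ 1 := by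
    rw [← Nat.cast_succ, norm_div, norm_one, RCLike.norm_natCast]
    exact div_le_one_of_le₀ (by simp) (by positivity)
  rw [norm_mul]
  exact mul_le_of_le_one_left (norm_nonneg _) weight_le_one

variable {c} in
lemma mul_kummerLogSum_add_one_sub (hc : ∀ k : ℕ, c + k ≠ 0) :
    x * (kummerLogSum x (c + 1) - kummerLogSum x c) = x / c - kummerTail x c := by
  have hc₀ : c ≠ 0 := by simpa using hc 0
  have term_diff (j : ℕ) : x * (1 / ((j : 𝕜) + 1) * kummerTerm x (c + 1) (j + 1)
      - 1 / ((j : 𝕜) + 1) * kummerTerm x c (j + 1)) = -kummerTerm x c (j + 1 + 1) := by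
    have hj : (j : 𝕜) + 1 ≠ 0 := Nat.cast_add_one_ne_zero j
    rw [← mul_sub, mul_left_comm, mul_kummerTerm_add_one_sub x hc₀ (hc (j + 1))]
    push_cast
    field_simp
  have tail_split : kummerTail x c = x / c + ∑' j : ℕ, kummerTerm x c (j + 1 + 1) := by
    rw [kummerTail, (summable_kummerTerm_succ x c).tsum_eq_zero_add, kummerTerm_succ,
      kummerTerm_zero, Nat.cast_zero, add_zero, mul_one]
  calc x * (kummerLogSum x (c + 1) - kummerLogSum x c)
      = ∑' j : ℕ, -kummerTerm x c (j + 1 + 1) := by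
        rw [kummerLogSum, kummerLogSum,
          ← (summable_kummerLogSum x (c + 1)).tsum_sub (summable_kummerLogSum x c),
          ← tsum_mul_left, tsum_congr term_diff]
    _ = x / c - kummerTail x c := by
        rw [tsum_neg, tail_split, sub_add_cancel_left]

variable {c} in
theorem sum_Ico_kummerTail {a b : ℕ} (hab : a ≤ b) (hc : ∀ k : ℕ, a ≤ k → c + k ≠ 0) :
    ∑ k ∈ Ico a b, kummerTail x (c + k) =
      x * ∑ k ∈ Ico a b, 1 / (c + k) - x * (kummerLogSum x (c + b) - kummerLogSum x (c + a)) := by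
  rw [← sum_Ico_sub (fun k : ℕ => kummerLogSum x (c + k)) hab, mul_sum, mul_sum,
    ← sum_sub_distrib]
  refine sum_congr rfl fun k hk => ?_
  have step := mul_kummerLogSum_add_one_sub x (c := c + k) fun i => by
    simpa [add_assoc] using hc (k + i) (le_add_right (mem_Ico.1 hk).1)
  rw [Nat.cast_succ, ← add_assoc, step]
  ring

end KummerSums

lemma real_Gamma_add_natCast {s : ℝ} (hs : ∀ k : ℕ, s + k ≠ 0) (j : ℕ) :
    Real.Gamma (s + j) = (ascPochhammer ℝ j).eval s * Real.Gamma s := by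
  induction j with
  | zero => simp
  | succ j ih =>
    rw [Nat.cast_succ, ← add_assoc, Real.Gamma_add_one (hs j), ih, ascPochhammer_succ_eval]
    ring

section ErlangA

/-- The constant `1 - m + ν` with `ν = m / η`, so that the Gamma argument in `h(p)` is
`erlangShift η m + p`; it may be negative, but the argument is positive for `p ≥ m`. -/
noncomputable def erlangShift (η : ℝ) (m : ℕ) : ℝ :=
  1 - m + m / η

variable {ρ η : ℝ} {m p : ℕ}

lemma erlangShift_add_eq : erlangShift η m + p = (p : ℝ) - m + 1 + m / η := by
  rw [erlangShift]
  ring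

lemma erlangShift_add_pos (hη : 0 < η) (hp : m ≤ p) : 0 < erlangShift η m + p := by
  have : (m : ℝ) ≤ p := mod_cast hp
  have : 0 ≤ (m : ℝ) / η := by positivity
  rw [erlangShift]
  linarith

lemma erlH0_pos (hρ : 0 < ρ) (hη : 0 < η) (hp : m ≤ p) : 0 < erlH0 ρ η m p := by
  refine div_pos (by positivity) (Real.Gamma_pos_of_pos ?_)
  rw [← erlangShift_add_eq]
  exact erlangShift_add_pos hη hp

lemma erlH0_add (hρ : 0 < ρ) (hη : 0 < η) (hp : m ≤ p) (j : ℕ) :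
    erlH0 ρ η m (p + j) =
      erlH0 ρ η m p * kummerTerm (ρ / η) (erlangShift η m + p) j := by
  have hs (k : ℕ) : erlangShift η m + p + k ≠ 0 :=
    (add_pos_of_pos_of_nonneg (erlangShift_add_pos hη hp) k.cast_nonneg).ne'
  have exponent : ((p + j : ℕ) : ℝ) - m + m / η = p - m + m / η + j := by push_cast; ring
  have gamma_arg : ((p + j : ℕ) : ℝ) - m + 1 + m / η = erlangShift η m + p + j := by
    rw [erlangShift_add_eq]
    push_cast
    ring
  rw [erlH0, erlH0, kummerTerm, exponent, gamma_arg, ← erlangShift_add_eq,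
    Real.rpow_add_natCast (div_pos hρ hη).ne', real_Gamma_add_natCast hs,
    mul_comm (Polynomial.eval _ _), mul_div_mul_comm]

lemma erlH0_add_div (hρ : 0 < ρ) (hη : 0 < η) (hp : m ≤ p) (j : ℕ) :
    erlH0 ρ η m (p + j) / erlH0 ρ η m p =
      kummerTerm (ρ / η) (erlangShift η m + p) j := by
  rw [erlH0_add hρ hη hp, mul_div_cancel_left₀ _ (erlH0_pos hρ hη hp).ne']

lemma one_div_erlH0_mul_tsum (hρ : 0 < ρ) (hη : 0 < η) (hp : m ≤ p) :
    1 / erlH0 ρ η m p * ∑' j : ℕ, erlH0 ρ η m (p + 1 + j) =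
      kummerTail (ρ / η) (erlangShift η m + p) := by
  rw [kummerTail, ← tsum_mul_left]
  refine tsum_congr fun j => ?_
  rw [← erlH0_add_div hρ hη hp, one_div_mul_eq_div, add_assoc p 1 j, add_comm 1 j]

lemma summable_erlH0 (hρ : 0 < ρ) (hη : 0 < η) : Summable (erlH0 ρ η m) := by
  rw [← summable_nat_add_iff m]
  refine ((summable_kummerTerm (ρ / η) (erlangShift η m + m)).mul_left (erlH0 ρ η m m)).congr
    fun j => ?_
  rw [add_comm j m, erlH0_add hρ hη le_rfl]

lemma hasSum_erlH0_div_sub {q : ℕ} (hρ : 0 < ρ) (hη : 0 < η) (hp : m ≤ p) (hq : m ≤ q) :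
    HasSum (fun J : ℕ => 1 / ((J : ℝ) + 1) * (erlH0 ρ η m (q + (J + 1)) / erlH0 ρ η m q
        - erlH0 ρ η m (p + (J + 1)) / erlH0 ρ η m p))
      (kummerLogSum (ρ / η) (erlangShift η m + q)
        - kummerLogSum (ρ / η) (erlangShift η m + p)) := by
  have log_sub := (summable_kummerLogSum (ρ / η) (erlangShift η m + q)).hasSum.sub
    (summable_kummerLogSum (ρ / η) (erlangShift η m + p)).hasSum
  simpa only [← mul_sub, ← erlH0_add_div hρ hη hq, ← erlH0_add_div hρ hη hp, kummerLogSum]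
    using log_sub

end ErlangA

/-- the summation identity, proved by backward induction in the paper,
reconciling the two expressions for the conditional mean first passage time of the
Erlang A model.  Here the digamma difference ψ(n−m+1+ν) − ψ(n*−m+1+ν) is written as
the finite sum −Σ_{k=n}^{n*−1} 1/(k−m+1+ν). -/
theorem erlangA_mean_first_passage_summation_identity (ρ η : ℝ)
    (hρ : 0 < ρ) (hη : 0 < η) (m n nst : ℕ) (hm : 1 ≤ m) (hn : m ≤ n) (hnn : n < nst) :
    Summable (fun p : ℕ => erlH0 ρ η m p)
    ∧ Summable (fun J : ℕ => (1 / ((J : ℝ) + 1)) *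
        (erlH0 ρ η m (nst + (J + 1)) / erlH0 ρ η m nst
          - erlH0 ρ η m (n + (J + 1)) / erlH0 ρ η m n))
    ∧ (1 / ρ) * (∑ J ∈ Finset.Ico n nst,
          (1 / erlH0 ρ η m J) * ∑' p : ℕ, erlH0 ρ η m (J + 1 + p))
        - (1 / η) * (∑ k ∈ Finset.Ico n nst, 1 / ((k : ℝ) - m + 1 + m / η))
        + (1 / η) * ∑' J : ℕ, (1 / ((J : ℝ) + 1)) *
            (erlH0 ρ η m (nst + (J + 1)) / erlH0 ρ η m nst
              - erlH0 ρ η m (n + (J + 1)) / erlH0 ρ η m n)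
      = 0 := by
  have tails : ∑ J ∈ Ico n nst, 1 / erlH0 ρ η m J * ∑' p : ℕ, erlH0 ρ η m (J + 1 + p) =
      ∑ J ∈ Ico n nst, kummerTail (ρ / η) (erlangShift η m + J) :=
    sum_congr rfl fun J hJ => one_div_erlH0_mul_tsum hρ hη (hn.trans (mem_Ico.1 hJ).1)
  have telescoped := sum_Ico_kummerTail (ρ / η) hnn.le fun k hk =>
    (erlangShift_add_pos hη (hn.trans hk)).ne'
  have log_sum := hasSum_erlH0_div_sub hρ hη hn (hn.trans hnn.le)
  refine ⟨summable_erlH0 hρ hη, log_sum.summable, ?_⟩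
  rw [log_sum.tsum_eq, tails, telescoped]
  simp only [erlangShift_add_eq]
  field_simp
  ring
end
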